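/- arXiv:1503.00918 — 2 statements merged into one kernel-verified Lean document; each statement's English description precedes it below -/
import Mathlib

section
/- Let n ≥ 2 and let x_1,…,x_{n−1}, t, y, v_1,…,v_n, u_1 ∈ P be such that x_1,…,x_{n−1}, y are pairwise distinct and v_1,…,v_n, u_1 are pairwise distinct. Then in Q_n(P): Δ((x_1,…,x_{n−1},t),(v_1,v_2,…,v_n)) / Δ((x_1,…,x_{n−1},y),(v_1,v_2,…,v_n)) = Δ((x_1,…,x_{n−1},t),(u_1,v_2,…,v_n)) / Δ((x_1,…,x_{n−1},y),(u_1,v_2,…,v_n)). -/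
noncomputable section

open scoped Classical
open MvPolynomial

set_option maxHeartbeats 1000000
set_option synthInstance.maxHeartbeats 400000

instance fact01 : Fact ((0:ℝ) < 1) := ⟨one_pos⟩

/-- The circle, modelled as `ℝ/ℤ`. -/
abbrev Circle1 : Type := AddCircle (1:ℝ)

/-- The coordinate in `[0,1)` of the point `x` of the circle obtained after removing the
point `o` and identifying the complement of `o` with an interval. -/
def coordAt (o x : Circle1) : ℝ := ((AddCircle.equivIco 1 0) (x - o) : ℝ)

/-- The sign `△` of a real number, as a rational number in `{-1, 0, 1}`. -/
def sgnQ (a : ℝ) : ℚ := if a < 0 then -1 else if a = 0 then 0 else 1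

/-- The linking number `J(rx, sy)` of the chords `rx` and `sy`, computed using the
cut point `o`. -/
def linkingAt (o r x s y : Circle1) : ℚ :=
  (1/2) * (sgnQ (coordAt o r - coordAt o x) * sgnQ (coordAt o r - coordAt o y)
        * sgnQ (coordAt o y - coordAt o x)
      - sgnQ (coordAt o r - coordAt o x) * sgnQ (coordAt o r - coordAt o s)
        * sgnQ (coordAt o s - coordAt o x))

lemma circle1_infinite : Infinite Circle1 := by
  have h : (Set.Ico (0:ℝ) (0+1)).Infinite := Set.Ico_infinite (by norm_num)
  haveI := h.to_subtype
  exact Infinite.of_injective (fun q : Set.Ico (0:ℝ) (0+1) => (AddCircle.equivIco 1 0).symm q)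
    ((AddCircle.equivIco 1 0).symm.injective)

lemma exists_cut (r x s y : Circle1) :
    ∃ o : Circle1, o ≠ r ∧ o ≠ x ∧ o ≠ s ∧ o ≠ y := by
  haveI : Infinite Circle1 := circle1_infinite
  have hfin : ({r, x, s, y} : Set Circle1).Finite :=
    (((Set.finite_singleton y).insert s).insert x).insert r
  obtain ⟨o, ho⟩ := hfin.infinite_compl.nonempty
  simp only [Set.mem_compl_iff, Set.mem_insert_iff, Set.mem_singleton_iff, not_or] at ho
  exact ⟨o, ho.1, ho.2.1, ho.2.2.1, ho.2.2.2⟩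

/-- The linking number `J(rx, sy)` of the chords `rx` and `sy` (computed with respect to
some cut point distinct from the four points; by the independence of the choice this is
the linking number). -/
def linkQ (r x s y : Circle1) : ℚ := linkingAt (exists_cut r x s y).choose r x s y

/-- The set of points of the circle `l`, listed in anticlockwise (cyclic) order:
there is a cut point `o` avoiding them such that the induced coordinates are
strictly increasing along the list. -/
def AnticlockwiseList (l : List Circle1) : Prop :=
  ∃ o : Circle1, (∀ p ∈ l, p ≠ o) ∧ (l.map (coordAt o)).Chain' (· < ·)

/-- Index type for the generators `xy` of the swapping ring of `P`
(one generator for each ordered pair of distinct points; the generators `xx`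
are identified with `0`). -/
abbrev SwapIdx (P : Set Circle1) : Type := {q : (↥P) × (↥P) // q.1 ≠ q.2}

/-- The swapping ring `Z(P)`: the polynomial ring over `K` on the generators `xy`,
`x ≠ y ∈ P` (this realizes the commutative ring generated by all ordered pairs `xy`
subject to the relations `xx = 0`). -/
abbrev SwapRing (K : Type) [Field K] (P : Set Circle1) : Type := MvPolynomial (SwapIdx P) K

/-- The generator `xy` of the swapping ring (equal to `0` when `x = y`). -/
def gen (K : Type) [Field K] (P : Set Circle1) (x y : ↥P) : SwapRing K P :=
  if h : x ≠ y then MvPolynomial.X (⟨(x, y), h⟩ : SwapIdx P) else 0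

/-- The value of the `(c1,c2)`-swapping bracket on two generators `rx` and `sy`:
`J(rx,sy) • (c1 • ry·sx + c2 • rx·sy)`. -/
def genBr (K : Type) [Field K] (P : Set Circle1) (c1 c2 : K) (g g' : SwapIdx P) :
    SwapRing K P :=
  ((linkQ g.1.1.1 g.1.2.1 g'.1.1.1 g'.1.2.1 : ℚ) : K) •
    (c1 • (gen K P g.1.1 g'.1.2 * gen K P g'.1.1 g.1.2)
      + c2 • (gen K P g.1.1 g.1.2 * gen K P g'.1.1 g'.1.2))

/-- The `(c1,c2)`-swapping bracket on `Z(P)`: the biderivation extending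
`{rx, sy} = J(rx,sy)·(c1·ry·sx + c2·rx·sy)` by the Leibniz rule in each argument.
The swapping bracket is the case `c1 = 1, c2 = 0`. -/
def swapBr (K : Type) [Field K] (P : Set Circle1) (c1 c2 : K) (a b : SwapRing K P) :
    SwapRing K P :=
  (MvPolynomial.mkDerivation K
    (fun g : SwapIdx P => (MvPolynomial.mkDerivation K (genBr K P c1 c2 g)) b)) a

/-- `Δ((x_1,…,x_m),(y_1,…,y_m)) = det (x_i y_j)` in the swapping ring. -/
def Dmat (K : Type) [Field K] (P : Set Circle1) (m : ℕ) (xs ys : Fin m → ↥P) :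
    SwapRing K P :=
  Matrix.det (Matrix.of fun i j => gen K P (xs i) (ys j))

/-- The ideal `R_n(P)` of `Z(P)` generated by all `(n+1)×(n+1)` determinants
`Δ((x_1,…,x_{n+1}),(y_1,…,y_{n+1}))`. -/
def Rideal (K : Type) [Field K] (P : Set Circle1) (n : ℕ) : Ideal (SwapRing K P) :=
  Ideal.span {D : SwapRing K P | ∃ xs ys : Fin (n+1) → ↥P, D = Dmat K P (n+1) xs ys}

/-- The rank `n` swapping ring `Z_n(P) = Z(P)/R_n(P)`. -/
abbrev ZnRing (K : Type) [Field K] (P : Set Circle1) (n : ℕ) : Type :=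
  SwapRing K P ⧸ Rideal K P n

/-- The quotient map `Z(P) → Z_n(P)`. -/
def toZn (K : Type) [Field K] (P : Set Circle1) (n : ℕ) :
    SwapRing K P →+* ZnRing K P n := Ideal.Quotient.mk (Rideal K P n)

/-- The total fraction ring `Q_n(P)` of the rank `n` swapping ring. -/
abbrev QnRing (K : Type) [Field K] (P : Set Circle1) (n : ℕ) : Type :=
  Localization (nonZeroDivisors (ZnRing K P n))

/-- The canonical map `Z(P) → Q_n(P)`. -/
def toQn (K : Type) [Field K] (P : Set Circle1) (n : ℕ) :
    SwapRing K P →+* QnRing K P n :=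
  (algebraMap (ZnRing K P n) (QnRing K P n)).comp (toZn K P n)

/-- `Bq` is the extension to the total fraction ring `Q_n(P)` of the `(c1,c2)`-swapping
bracket of the rank `n` swapping algebra: it agrees with the swapping bracket on the image
of `Z(P)` and satisfies the Leibniz rule in both arguments (these properties determine it
uniquely). -/
def IsQnBracket (K : Type) [Field K] (P : Set Circle1) (n : ℕ) (c1 c2 : K)
    (Bq : QnRing K P n → QnRing K P n → QnRing K P n) : Prop :=
  (∀ a b : SwapRing K P,
      Bq (toQn K P n a) (toQn K P n b) = toQn K P n (swapBr K P c1 c2 a b)) ∧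
  (∀ a b c : QnRing K P n, Bq (a * b) c = a * Bq b c + b * Bq a c) ∧
  (∀ a b c : QnRing K P n, Bq a (b * c) = b * Bq a c + c * Bq a b)

/-- The `n`-tuple `(x_1, …, x_a, y_1, …, y_b, z_1, …, z_{n-a-b})` built from three
families of points (families are indexed from `0`, i.e. `x 0 = x_1`). -/
def rows3 {α : Type*} {n : ℕ} (x y z : ℕ → α) (a b : ℕ) : Fin n → α :=
  fun i => if (i : ℕ) < a then x (i : ℕ)
    else if (i : ℕ) < a + b then y ((i : ℕ) - a)
    else z ((i : ℕ) - (a + b))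

/-- The `n`-tuple `(x_1, …, x_a, y_1, …, y_b, z_1, …, z_{n-1-a-b}, w)` built from three
families of points and a final point `w`. -/
def rows3s {α : Type*} {n : ℕ} (x y z : ℕ → α) (a b : ℕ) (w : α) : Fin n → α :=
  fun i => if (i : ℕ) < a then x (i : ℕ)
    else if (i : ℕ) < a + b then y ((i : ℕ) - a)
    else if (i : ℕ) < n - 1 then z ((i : ℕ) - (a + b))
    else w

/-- The `n`-tuple `(x_1, …, x_{n-1}, t)`. -/
def snocTup {α : Type*} {n : ℕ} (x : ℕ → α) (t : α) : Fin n → α :=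
  fun i => if (i : ℕ) < n - 1 then x (i : ℕ) else t

/-- The list `f_a, f_{a-1}, …, f_1` (descending enumeration). -/
def descPts (f : ℕ → Circle1) (a : ℕ) : List Circle1 := ((List.range a).map f).reverse

/-- The list `f_1, f_2, …, f_a` (ascending enumeration). -/
def ascPts (f : ℕ → Circle1) (a : ℕ) : List Circle1 := (List.range a).map f

/-- The `(n×n)`-determinant quotient `Δ(numR, v)/Δ(denR, v)` as an element of the total
fraction ring `Q_n(P)`. -/
def EQuot (K : Type) [Field K] (P : Set Circle1) (n : ℕ)
    (numR denR v : Fin n → ↥P)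
    (h : toZn K P n (Dmat K P n denR v) ∈ nonZeroDivisors (ZnRing K P n)) :
    QnRing K P n :=
  Localization.mk (toZn K P n (Dmat K P n numR v)) ⟨toZn K P n (Dmat K P n denR v), h⟩

/-!
Send the generator `xy` to the contraction `⟨x, y⟩` of a generic vector at `x` with a generic
covector at `y`, in dimension `n`. By the second fundamental theorem of invariant theory the
`(n + 1) × (n + 1)` minors of a generic matrix generate the kernel of this map; the leading
monomials of minors and contractions for a lexicographic order prove it. The relations `xx = 0`
become the ideal `q` generated by the contractions `⟨x, x⟩`. A Reynolds operator onto the algebra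
of contractions shows that an element of that algebra lying in `q` is already a combination of
the `⟨x, x⟩` with coefficients in the algebra; the operator is the orthogonal projection for
Fischer's inner product, whose adjoints of multiplications by contractions preserve the algebra of
contractions, as in Capelli's identity. Hence `R_n(P)` is the preimage of `q`.

For `n ≥ 2` the ideal `q` is prime: solving `⟨x, x⟩ = 0` for the product of the first coordinates
presents the quotient inside a ring of Laurent polynomials over a domain. Modulo `q`, an `n × n`
determinant `Δ(x, y)` splits as `det x * det y`, with both factors nonzero when the points of `x`
and the points of `y` are distinct, so the quotient `Δ(x, v) / Δ(x', v)` does not depend on `v`.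
-/

section RowMajorOrder

open scoped MonomialOrder

lemma exists_lt_of_mapDomain_eq {σ τ : Type*} {π : σ → τ} {p p' : σ →₀ ℕ}
    (hπ : p.mapDomain π = p'.mapDomain π) {s : σ} (hs : p s < p' s) :
    ∃ s', π s' = π s ∧ p' s' < p s' := by
  by_contra! hle
  have hmass : p.mapDomain π (π s) < p'.mapDomain π (π s) := by
    have hsupport (q : σ →₀ ℕ) (hq : q.support ⊆ p.support ∪ p'.support) :
        q.mapDomain π (π s) = ∑ s' ∈ p.support ∪ p'.support with π s' = π s, q s' := by
      rw [Finsupp.mapDomain_apply_eq_sum]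
      refine Finset.sum_subset (Finset.filter_subset_filter _ hq) fun s' hs' hns' => ?_
      simp_all
    rw [hsupport p Finset.subset_union_left, hsupport p' Finset.subset_union_right]
    refine Finset.sum_lt_sum (fun s' hs' => hle s' (Finset.mem_filter.1 hs').2) ⟨s, ?_, hs⟩
    simp [(Nat.zero_le _).trans_lt hs |>.ne']
  exact hmass.ne (DFunLike.congr_fun hπ _)

lemma exists_fin_coloring_of_no_chain {σ : Type*} {r : σ → σ → Prop} [IsStrictOrder σ r] {n : ℕ}
    (hchain : ∀ f : Fin (n + 1) → σ, ¬ ∀ k l, k < l → r (f k) (f l)) :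
    ∃ colour : σ → Fin n, ∀ a b, r a b → colour a < colour b := by
  let := partialOrderOfSO r
  have hheight (a : σ) : Order.height a < n := by
    by_contra! hle
    obtain ⟨p, -, rfl⟩ := Order.exists_series_of_le_height a hle
    exact hchain p.toFun fun _ _ h => p.strictMono h
  choose height hh using fun a => ENat.ne_top_iff_exists.1 (hheight a).ne_top
  refine ⟨fun a => ⟨height a, by exact_mod_cast (hh a).trans_lt (hheight a)⟩, fun a b hab => ?_⟩
  have hlt := Order.height_strictMono (show a < b from hab) (hheight a |>.trans_le le_top)
  rw [← hh a, ← hh b] at hlt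
  exact_mod_cast hlt

section Layer

variable {σ τ : Type*} {n : ℕ}

lemma exponent_induction {motive : (σ →₀ ℕ) → Prop} (zero : motive 0)
    (add : ∀ m m', motive m → motive m' → motive (m + m'))
    (single_one : ∀ s, motive (Finsupp.single s 1)) (m : σ →₀ ℕ) : motive m := by
  refine Finsupp.induction_linear m zero add fun s e => ?_
  induction e with
  | zero => rwa [Finsupp.single_zero]
  | succ e ih => rw [Finsupp.single_add]; exact add _ _ ih (single_one s)

/-- The restriction of an exponent on `σ × Fin n` to the layer `σ × {k}`. -/
def layer (k : Fin n) : (σ × Fin n →₀ ℕ) →+ (σ →₀ ℕ) :=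
  Finsupp.comapDomain.addMonoidHom (Prod.mk_left_injective k)

lemma layer_apply (k : Fin n) (M : σ × Fin n →₀ ℕ) (s : σ) : layer k M s = M (s, k) := rfl

lemma layer_single (k l : Fin n) (s : σ) (e : ℕ) :
    layer k (Finsupp.single (s, l) e) = if l = k then Finsupp.single s e else 0 := by
  ext s'
  split_ifs with h <;> simp [layer_apply, Finsupp.single_apply, h]

lemma sum_layer (M : σ × Fin n →₀ ℕ) : ∑ k, layer k M = M.mapDomain Prod.fst := by
  induction M using Finsupp.induction_linear with
  | zero => simp
  | add M M' hM hM' => simp only [map_add, Finset.sum_add_distrib, hM, hM', Finsupp.mapDomain_add]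
  | single s e => obtain ⟨s, l⟩ := s; simp [layer_single, Finsupp.mapDomain_single]

lemma mapDomain_layer (f : σ → τ) (k : Fin n) (M : σ × Fin n →₀ ℕ) :
    (layer k M).mapDomain f = layer k (M.mapDomain (Prod.map f id)) := by
  induction M using Finsupp.induction_linear with
  | zero => simp
  | add M M' hM hM' => simp only [map_add, hM, hM', Finsupp.mapDomain_add]
  | single s e =>
    obtain ⟨s, l⟩ := s
    rw [layer_single, Finsupp.mapDomain_single, Prod.map_apply, id, layer_single]
    split_ifs <;> simp [Finsupp.mapDomain_single]

end Layer

section Margins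

variable {α β : Type*}

/-- The row sums and the column sums of a matrix of exponents. -/
def margins (p : α × β →₀ ℕ) : α ⊕ β →₀ ℕ :=
  p.mapDomain (Sum.inl ∘ Prod.fst) + p.mapDomain (Sum.inr ∘ Prod.snd)

lemma margins_inl (p : α × β →₀ ℕ) (i : α) : margins p (Sum.inl i) = p.mapDomain Prod.fst i := by
  rw [margins, Finsupp.add_apply, Finsupp.mapDomain_comp (f := Prod.fst),
    Finsupp.mapDomain_apply Sum.inl_injective,
    Finsupp.mapDomain_of_notMem_range p (Sum.inl i) (by simp), add_zero]

lemma margins_inr (p : α × β →₀ ℕ) (j : β) : margins p (Sum.inr j) = p.mapDomain Prod.snd j := by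
  rw [margins, Finsupp.add_apply, Finsupp.mapDomain_comp (f := Prod.snd),
    Finsupp.mapDomain_apply Sum.inr_injective,
    Finsupp.mapDomain_of_notMem_range p (Sum.inr j) (by simp), zero_add]

lemma mapDomain_fst_eq_of_margins_eq {p p' : α × β →₀ ℕ} (h : margins p = margins p') :
    p.mapDomain Prod.fst = p'.mapDomain Prod.fst :=
  Finsupp.ext fun i => by rw [← margins_inl, h, margins_inl]

lemma mapDomain_snd_eq_of_margins_eq {p p' : α × β →₀ ℕ} (h : margins p = margins p') :
    p.mapDomain Prod.snd = p'.mapDomain Prod.snd :=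
  Finsupp.ext fun j => by rw [← margins_inr, h, margins_inr]

end Margins

variable {α β : Type*} [LinearOrder α] [LinearOrder β]

/-- The exponent of the monomial `∏ k, X (x k, y k)`. -/
def diagonalExponent {r : ℕ} (x : Fin r → α) (y : Fin r → β) : α × β →₀ ℕ :=
  ∑ k, Finsupp.single (x k, y k) 1

/-- No two entries of the support lie strictly south-east of one another. -/
def DiagonalFree (p : α × β →₀ ℕ) : Prop :=
  ∀ s ∈ p.support, ∀ s' ∈ p.support, s.1 < s'.1 → s'.2 ≤ s.2

lemma diagonalExponent_le_of_strictMono {r : ℕ} {x : Fin r → α} {y : Fin r → β}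
    (hx : StrictMono x) {m : α × β →₀ ℕ} (hm : ∀ k, (x k, y k) ∈ m.support) :
    diagonalExponent x y ≤ m := by
  intro s
  simp only [diagonalExponent, Finsupp.finsetSum_apply, Finsupp.single_apply]
  by_cases hs : ∃ k, (x k, y k) = s
  · obtain ⟨k, rfl⟩ := hs
    rw [Finset.sum_eq_single_of_mem k (Finset.mem_univ k)]
    · simpa [Nat.one_le_iff_ne_zero] using hm k
    · exact fun l _ hl => if_neg fun h => hl (hx.injective (Prod.ext_iff.1 h).1)
  · rw [Finset.sum_eq_zero fun k _ => if_neg fun h => hs ⟨k, h⟩]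
    exact Nat.zero_le _

lemma exists_diagonalFree_layering {n : ℕ} {m : α × β →₀ ℕ}
    (hm : ∀ (x : Fin (n + 1) → α) (y : Fin (n + 1) → β), StrictMono x → StrictMono y →
      ¬ diagonalExponent x y ≤ m) :
    ∃ M : (α × β) × Fin n →₀ ℕ, M.mapDomain Prod.fst = m ∧ ∀ k, DiagonalFree (layer k M) := by
  let southEast (s s' : m.support) : Prop := s.1.1 < s'.1.1 ∧ s.1.2 < s'.1.2
  have : IsStrictOrder m.support southEast :=
    { irrefl := fun s h => h.1.false
      trans := fun _ _ _ h h' => ⟨h.1.trans h'.1, h.2.trans h'.2⟩ }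
  obtain ⟨colour, hcolour⟩ := exists_fin_coloring_of_no_chain (r := southEast) (n := n)
    fun f hf => by
      have hx : StrictMono fun k => (f k).1.1 := fun k l h => (hf k l h).1
      exact hm _ (fun k => (f k).1.2) hx (fun k l h => (hf k l h).2)
        (diagonalExponent_le_of_strictMono hx fun k => (f k).2)
  refine ⟨∑ s : m.support, Finsupp.single (s.1, colour s) (m s.1), ?_, fun k s hs s' hs' hrow => ?_⟩
  · rw [Finsupp.mapDomain_finsetSum]
    simp only [Finsupp.mapDomain_single]
    rw [Finset.sum_coe_sort m.support fun s => Finsupp.single s (m s)]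
    exact m.sum_single
  · have exists_colour_eq {s : α × β} (hs : s ∈ (layer k (∑ s : m.support,
        Finsupp.single (s.1, colour s) (m s.1))).support) :
        ∃ h : s ∈ m.support, colour ⟨s, h⟩ = k := by
      rw [Finsupp.mem_support_iff, layer_apply, Finsupp.finsetSum_apply] at hs
      obtain ⟨⟨s₀, hs₀⟩, -, hne⟩ := Finset.exists_ne_zero_of_sum_ne_zero hs
      obtain ⟨rfl, rfl⟩ := Prod.mk.inj (Finsupp.single_apply_ne_zero.1 hne).1
      exact ⟨hs₀, rfl⟩
    obtain ⟨hs, hk⟩ := exists_colour_eq hs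
    obtain ⟨hs', hk'⟩ := exists_colour_eq hs'
    by_contra! hlt
    exact (hcolour ⟨s, hs⟩ ⟨s', hs'⟩ ⟨hrow, hlt⟩).ne (hk.trans hk'.symm)

variable [WellFoundedGT α] [WellFoundedGT β]

instance wellFoundedGT_prodLex : WellFoundedGT (α ×ₗ β) :=
  StrictAnti.wellFoundedGT (β := αᵒᵈ ×ₗ βᵒᵈ)
    (f := fun s => toLex (OrderDual.toDual (ofLex s).1, OrderDual.toDual (ofLex s).2))
    fun s t h => by
      rw [Prod.Lex.lt_iff] at h
      simpa [Prod.Lex.toLex_lt_toLex, eq_comm] using h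

/-- The lexicographic monomial order on the entries of a matrix, read row by row. -/
def rowMajorOrder (α β : Type*) [LinearOrder α] [LinearOrder β] [WellFoundedGT α]
    [WellFoundedGT β] : MonomialOrder (α × β) where
  syn := (MonomialOrder.lex (σ := α ×ₗ β)).syn
  toSyn := (Finsupp.domCongr toLex).trans MonomialOrder.lex.toSyn
  toSyn_monotone := fun _ _ h => MonomialOrder.lex.toSyn_monotone fun s => h (ofLex s)

lemma rowMajorOrder_lt_iff {p p' : α × β →₀ ℕ} :
    p ≺[rowMajorOrder α β] p' ↔
      ∃ s, (∀ s', toLex s' < toLex s → p s' = p' s') ∧ p s < p' s :=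
  Finsupp.Lex.lt_iff

lemma exists_crossings_of_rowMajorOrder_lt {p p' : α × β →₀ ℕ}
    (hmargins : margins p = margins p') (hlt : p ≺[rowMajorOrder α β] p') :
    (∃ i i' j j', i < i' ∧ j < j' ∧ p (i, j') ≠ 0 ∧ p (i', j) ≠ 0) ∧
      ∃ i i' j j', i < i' ∧ j < j' ∧ p' (i, j) ≠ 0 ∧ p' (i', j') ≠ 0 := by
  have hrow := mapDomain_fst_eq_of_margins_eq hmargins
  have hcol := mapDomain_snd_eq_of_margins_eq hmargins
  obtain ⟨⟨i, j⟩, hprefix, hij⟩ := rowMajorOrder_lt_iff.1 hlt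
  obtain ⟨⟨i₁, j'⟩, hrow_eq, hij'⟩ := exists_lt_of_mapDomain_eq hrow hij
  obtain rfl : i₁ = i := hrow_eq
  obtain ⟨⟨i₂, j₁⟩, hcol_eq, hi₂j⟩ := exists_lt_of_mapDomain_eq hcol hij
  obtain rfl : j₁ = j := hcol_eq
  obtain ⟨⟨i₃, j₂⟩, hcol_eq, hi₃j'⟩ := exists_lt_of_mapDomain_eq hcol.symm hij'
  obtain rfl : j₂ = j' := hcol_eq
  have not_before {i' : α} {j' : β} (hne : p (i', j') ≠ p' (i', j')) :
      ¬ (i' < i₁ ∨ i' = i₁ ∧ j' < j₁) :=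
    fun h => hne (hprefix _ (Prod.Lex.toLex_lt_toLex.2 h))
  have hj : j₁ < j₂ := by
    have := not_before hij'.ne'
    grind
  have hi₂ : i₁ < i₂ := by
    have := not_before hi₂j.ne'
    grind
  have hi₃ : i₁ < i₃ := by
    have := not_before hi₃j'.ne
    grind
  exact ⟨⟨i₁, i₂, j₁, j₂, hi₂, hj, by lia, by lia⟩, i₁, i₃, j₁, j₂, hi₃, hj, by lia, by lia⟩

lemma DiagonalFree.rowMajorOrder_le {p p' : α × β →₀ ℕ} (hp : DiagonalFree p)
    (hmargins : margins p = margins p') : p ≼[rowMajorOrder α β] p' := by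
  by_contra! hlt
  obtain ⟨-, i, i', j, j', hi, hj, hij, hij'⟩ :=
    exists_crossings_of_rowMajorOrder_lt hmargins.symm hlt
  exact (hp (i, j) (by simpa) (i', j') (by simpa) hi).not_gt hj

end RowMajorOrder

section GenericMinor

open scoped MonomialOrder

variable {α β : Type*} {r : ℕ}

/-- The determinant of the submatrix of the generic `α × β` matrix on the rows `x` and the
columns `y`. -/
def genericMinor (R : Type*) [CommRing R] (x : Fin r → α) (y : Fin r → β) :
    MvPolynomial (α × β) R :=
  Matrix.det (Matrix.of fun k l => X (x k, y l))

/-- The ideal generated by the `r × r` minors of the generic `α × β` matrix. -/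
def determinantalIdeal (α β R : Type*) [CommRing R] (r : ℕ) : Ideal (MvPolynomial (α × β) R) :=
  Ideal.span (Set.range fun s : (Fin r → α) × (Fin r → β) => genericMinor R s.1 s.2)

lemma monomial_diagonalExponent {R : Type*} [CommSemiring R] (x : Fin r → α) (y : Fin r → β) :
    monomial (diagonalExponent x y) (1 : R) = ∏ k, X (x k, y k) := by
  simp only [diagonalExponent, monomial_sum_one, X]

lemma coeff_genericMinor (R : Type*) [CommRing R] (x : Fin r → α) (y : Fin r → β)
    (c : α × β →₀ ℕ) :
    coeff c (genericMinor R x y) =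
      ∑ σ : Equiv.Perm (Fin r),
        if diagonalExponent (x ∘ σ) y = c then ((σ.sign : ℤ) : R) else 0 := by
  simp only [genericMinor, Matrix.det_apply', Matrix.of_apply, coeff_sum]
  refine Finset.sum_congr rfl fun σ _ => ?_
  have hprod : ∏ k, (X (x (σ k), y k) : MvPolynomial (α × β) R) =
      monomial (diagonalExponent (x ∘ σ) y) 1 := (monomial_diagonalExponent (x ∘ σ) y).symm
  rw [hprod, ← map_intCast (C : R →+* MvPolynomial (α × β) R), coeff_C_mul, coeff_monomial,
    mul_ite, mul_one, mul_zero]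

lemma margins_diagonalExponent (x : Fin r → α) (y : Fin r → β) :
    margins (diagonalExponent x y) =
      ∑ k, Finsupp.single (Sum.inl (x k)) 1 + ∑ k, Finsupp.single (Sum.inr (y k)) 1 := by
  simp [margins, diagonalExponent, Finsupp.mapDomain_finsetSum, Finsupp.mapDomain_single]

lemma exists_of_diagonalExponent_apply_ne_zero {x : Fin r → α} {y : Fin r → β} {s : α × β}
    (hs : diagonalExponent x y s ≠ 0) : ∃ k, (x k, y k) = s := by
  rw [diagonalExponent, Finsupp.finsetSum_apply] at hs
  obtain ⟨k, -, hk⟩ := Finset.exists_ne_zero_of_sum_ne_zero hs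
  exact ⟨k, by simpa [Finsupp.single_apply] using hk⟩

lemma diagonalExponent_apply_ne_zero (x : Fin r → α) (y : Fin r → β) (k : Fin r) :
    diagonalExponent x y (x k, y k) ≠ 0 := by
  rw [diagonalExponent, Finsupp.finsetSum_apply, ne_eq, Finset.sum_eq_zero_iff]
  exact fun h => by simpa using h k (Finset.mem_univ k)

lemma diagonalExponent_comp_perm_eq_iff {x : Fin r → α} {y : Fin r → β}
    (hx : Function.Injective x) (hy : Function.Injective y) (σ : Equiv.Perm (Fin r)) :
    diagonalExponent (x ∘ σ) y = diagonalExponent x y ↔ σ = 1 := by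
  refine ⟨fun h => Equiv.ext fun k => ?_, by rintro rfl; rfl⟩
  obtain ⟨l, hl⟩ := exists_of_diagonalExponent_apply_ne_zero
    (h ▸ diagonalExponent_apply_ne_zero (x ∘ σ) y k)
  obtain ⟨hxl, hyl⟩ := Prod.ext_iff.1 hl
  obtain rfl := hy hyl
  exact (hx hxl).symm

lemma coeff_diagonalExponent_genericMinor (R : Type*) [CommRing R] {x : Fin r → α}
    {y : Fin r → β} (hx : Function.Injective x) (hy : Function.Injective y) :
    coeff (diagonalExponent x y) (genericMinor R x y) = 1 := by
  simp [coeff_genericMinor, diagonalExponent_comp_perm_eq_iff hx hy]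

variable [LinearOrder α] [LinearOrder β] [WellFoundedGT α] [WellFoundedGT β]
  {x : Fin r → α} {y : Fin r → β}

lemma diagonalExponent_comp_perm_le (hx : StrictMono x) (hy : StrictMono y)
    (σ : Equiv.Perm (Fin r)) :
    diagonalExponent (x ∘ σ) y ≼[rowMajorOrder α β] diagonalExponent x y := by
  by_contra! hlt
  have hmargins : margins (diagonalExponent x y) = margins (diagonalExponent (x ∘ σ) y) := by
    rw [margins_diagonalExponent, margins_diagonalExponent]
    exact congrArg (· + _) (Equiv.sum_comp σ fun k => Finsupp.single (Sum.inl (x k)) 1).symm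
  obtain ⟨⟨i, i', j, j', hi, hj, hij', hi'j⟩, -⟩ :=
    exists_crossings_of_rowMajorOrder_lt hmargins hlt
  obtain ⟨k, hk⟩ := exists_of_diagonalExponent_apply_ne_zero hij'
  obtain ⟨l, hl⟩ := exists_of_diagonalExponent_apply_ne_zero hi'j
  simp only [Prod.mk.injEq] at hk hl
  have hkl : k < l := hx.lt_iff_lt.1 (by rw [hk.1, hl.1]; exact hi)
  exact (hy hkl).not_gt (by rw [hk.2, hl.2]; exact hj)

variable (R : Type*) [CommRing R]

lemma degree_genericMinor [Nontrivial R] (hx : StrictMono x) (hy : StrictMono y) :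
    (rowMajorOrder α β).degree (genericMinor R x y) = diagonalExponent x y := by
  refine (rowMajorOrder α β).toSyn.injective (le_antisymm ?_ ?_)
  · refine MonomialOrder.degree_le_iff.2 fun c hc => ?_
    rw [mem_support_iff, coeff_genericMinor] at hc
    obtain ⟨σ, -, hσ⟩ := Finset.exists_ne_zero_of_sum_ne_zero hc
    obtain rfl : diagonalExponent (x ∘ σ) y = c := by_contra fun hne => hσ (if_neg hne)
    exact diagonalExponent_comp_perm_le hx hy σ
  · refine MonomialOrder.le_degree (mem_support_iff.2 ?_)
    rw [coeff_diagonalExponent_genericMinor R hx.injective hy.injective]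
    exact one_ne_zero

lemma leadingCoeff_genericMinor [Nontrivial R] (hx : StrictMono x) (hy : StrictMono y) :
    (rowMajorOrder α β).leadingCoeff (genericMinor R x y) = 1 := by
  rw [MonomialOrder.leadingCoeff, degree_genericMinor R hx hy,
    coeff_diagonalExponent_genericMinor R hx.injective hy.injective]

lemma exists_remainder_mod_determinantalIdeal (r : ℕ) (f : MvPolynomial (α × β) R) :
    ∃ g, f - g ∈ determinantalIdeal α β R r ∧ ∀ c ∈ g.support, ∀ (x : Fin r → α) (y : Fin r → β),
      StrictMono x → StrictMono y → ¬ diagonalExponent x y ≤ c := by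
  nontriviality R
  let minors (s : {x : Fin r → α // StrictMono x} × {y : Fin r → β // StrictMono y}) :
      MvPolynomial (α × β) R := genericMinor R s.1.1 s.2.1
  obtain ⟨q, g, hfg, -, hg⟩ := (rowMajorOrder α β).div (b := minors)
    (fun s => by rw [leadingCoeff_genericMinor R s.1.2 s.2.2]; exact isUnit_one) f
  refine ⟨g, ?_, fun c hc x y hx hy hle => hg c hc (⟨x, hx⟩, ⟨y, hy⟩) ?_⟩
  · rw [hfg, add_sub_cancel_right]
    have hmem := LinearMap.mem_range_self (Finsupp.linearCombination _ minors) q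
    rw [Finsupp.range_linearCombination] at hmem
    refine Submodule.span_mono ?_ hmem
    rintro _ ⟨s, rfl⟩
    exact ⟨(s.1.1, s.2.1), rfl⟩
  · rwa [degree_genericMinor R hx hy]

end GenericMinor

section Contraction

open scoped MonomialOrder Matrix

variable {α β : Type*} {n : ℕ}

/-- The contraction `⟨i, j⟩` of the `i`-th generic vector with the `j`-th generic covector in
dimension `n`; the coordinates are the variables `(Sum.inl i, k)` and `(Sum.inr j, k)`. -/
def pairing (R : Type*) [CommSemiring R] (n : ℕ) (i : α) (j : β) :
    MvPolynomial ((α ⊕ β) × Fin n) R :=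
  ∑ k, X (Sum.inl i, k) * X (Sum.inr j, k)

/-- The algebra map sending the generic `α × β` matrix to the matrix of contractions, that is,
to the product of a generic `α × n` and a generic `n × β` matrix. -/
def contraction (α β R : Type*) [CommSemiring R] (n : ℕ) :
    MvPolynomial (α × β) R →ₐ[R] MvPolynomial ((α ⊕ β) × Fin n) R :=
  aeval fun s => pairing R n s.1 s.2

/-- The `n` coordinates of the generic vectors or covectors indexed by `v`, as the rows of a
matrix. -/
def coordMatrix (R : Type*) [CommSemiring R] (n : ℕ) {κ γ : Type*} (v : κ → γ) :
    Matrix κ (Fin n) (MvPolynomial (γ × Fin n) R) :=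
  Matrix.of fun k l => X (v k, l)

lemma contraction_X (R : Type*) [CommSemiring R] (s : α × β) :
    contraction α β R n (X s) = pairing R n s.1 s.2 :=
  aeval_X _ s

section CommRing

variable (R : Type*) [CommRing R]

lemma det_mul_eq_zero_of_succ (A : Matrix (Fin (n + 1)) (Fin n) R)
    (B : Matrix (Fin n) (Fin (n + 1)) R) : (A * B).det = 0 := by
  let A' : Matrix (Fin (n + 1)) (Fin (n + 1)) R := Matrix.of fun k => Fin.snoc (A k) 0
  let B' : Matrix (Fin (n + 1)) (Fin (n + 1)) R :=
    (Matrix.of fun l => Fin.snoc (Bᵀ l) 0)ᵀ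
  have hAB : A * B = A' * B' := by
    ext k l
    simp [A', B', Matrix.mul_apply, Fin.sum_univ_castSucc]
  rw [hAB, Matrix.det_mul, Matrix.det_eq_zero_of_column_eq_zero (Fin.last n) (by simp [A']),
    zero_mul]

lemma contraction_genericMinor {r : ℕ} (x : Fin r → α) (y : Fin r → β) :
    contraction α β R n (genericMinor R x y) =
      (coordMatrix R n (Sum.inl ∘ x : Fin r → α ⊕ β) *
        (coordMatrix R n (Sum.inr ∘ y : Fin r → α ⊕ β))ᵀ).det := by
  rw [genericMinor, AlgHom.map_det]
  congr 1
  ext1 k l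
  simp [contraction_X, pairing, coordMatrix, Matrix.mul_apply]

lemma contraction_genericMinor_eq_mul (x : Fin n → α) (y : Fin n → β) :
    contraction α β R n (genericMinor R x y) =
      (coordMatrix R n (Sum.inl ∘ x)).det * (coordMatrix R n (Sum.inr ∘ y)).det := by
  rw [contraction_genericMinor, Matrix.det_mul, Matrix.det_transpose]

lemma determinantalIdeal_le_ker_contraction :
    determinantalIdeal α β R (n + 1) ≤ RingHom.ker (contraction α β R n) := by
  refine Ideal.span_le.2 ?_
  rintro _ ⟨s, rfl⟩
  exact (contraction_genericMinor R s.1 s.2).trans (det_mul_eq_zero_of_succ _ _ _)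

end CommRing

/-- The exponent of the product of the monomials `X (inl i, k) * X (inr j, k)` over the entries
`((i, j), k)` of `M`, a typical term in the expansion of a product of contractions. -/
def layeredExponent (M : (α × β) × Fin n →₀ ℕ) : (α ⊕ β) × Fin n →₀ ℕ :=
  M.mapDomain (Prod.map (Sum.inl ∘ Prod.fst) id) + M.mapDomain (Prod.map (Sum.inr ∘ Prod.snd) id)

lemma layeredExponent_add (M M' : (α × β) × Fin n →₀ ℕ) :
    layeredExponent (M + M') = layeredExponent M + layeredExponent M' := by
  simp only [layeredExponent, Finsupp.mapDomain_add]
  abel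

lemma layeredExponent_single (s : α × β) (k : Fin n) :
    layeredExponent (Finsupp.single (s, k) 1) =
      Finsupp.single (Sum.inl s.1, k) 1 + Finsupp.single (Sum.inr s.2, k) 1 := by
  simp [layeredExponent, Finsupp.mapDomain_single]

lemma layer_layeredExponent (k : Fin n) (M : (α × β) × Fin n →₀ ℕ) :
    layer k (layeredExponent M) = margins (layer k M) := by
  rw [layeredExponent, map_add, ← mapDomain_layer, ← mapDomain_layer, margins]

lemma pairing_eq_sum_monomial (R : Type*) [CommSemiring R] (s : α × β) :
    pairing R n s.1 s.2 = ∑ k, monomial (layeredExponent (Finsupp.single (s, k) 1)) 1 := by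
  simp only [pairing, layeredExponent_single, X, monomial_mul, one_mul]

lemma exists_layeredExponent_eq_of_mem_support {R : Type*} [CommSemiring R] (m : α × β →₀ ℕ) :
    ∀ w ∈ (contraction α β R n (monomial m 1)).support,
      ∃ M : (α × β) × Fin n →₀ ℕ, M.mapDomain Prod.fst = m ∧ layeredExponent M = w := by
  induction m using exponent_induction with
  | zero =>
    intro w hw
    have hw : w = 0 := by
      by_contra hne
      rw [mem_support_iff, monomial_zero', C_1, map_one, coeff_one, if_neg (Ne.symm hne)] at hw
      exact hw rfl
    exact ⟨0, by simp, by simp [layeredExponent, hw]⟩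
  | add m m' ih ih' =>
    intro w hw
    have hmul : monomial (m + m') (1 : R) = monomial m 1 * monomial m' 1 := by
      rw [monomial_mul, one_mul]
    rw [hmul, map_mul] at hw
    obtain ⟨u, hu, u', hu', rfl⟩ := Finset.mem_add.1 (support_mul _ _ hw)
    obtain ⟨M, rfl, rfl⟩ := ih u hu
    obtain ⟨M', rfl, rfl⟩ := ih' u' hu'
    exact ⟨M + M', Finsupp.mapDomain_add, layeredExponent_add M M'⟩
  | single_one s =>
    intro w hw
    rw [← X, contraction_X, pairing_eq_sum_monomial, mem_support_iff, coeff_sum] at hw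
    obtain ⟨k, -, hk⟩ := Finset.exists_ne_zero_of_sum_ne_zero hw
    rw [coeff_monomial] at hk
    exact ⟨_, Finsupp.mapDomain_single, by_contra fun hne => hk (if_neg hne)⟩

-- Over `ℕ` the terms of the expansion cannot cancel.
lemma coeff_layeredExponent_contraction_nat_ne_zero (M : (α × β) × Fin n →₀ ℕ) :
    coeff (layeredExponent M)
      (contraction α β ℕ n (monomial (M.mapDomain Prod.fst) 1)) ≠ 0 := by
  induction M using exponent_induction with
  | zero => simp [layeredExponent]
  | add M M' ih ih' =>
    have hmul : monomial ((M + M').mapDomain Prod.fst) 1 =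
        monomial (M.mapDomain Prod.fst) (1 : ℕ) * monomial (M'.mapDomain Prod.fst) 1 := by
      rw [monomial_mul, one_mul, Finsupp.mapDomain_add]
    rw [hmul, map_mul, coeff_mul, ne_eq, Finset.sum_eq_zero_iff]
    intro h
    exact mul_ne_zero ih ih' (h (layeredExponent M, layeredExponent M')
      (by rw [Finset.HasAntidiagonal.mem_antidiagonal, layeredExponent_add]))
  | single_one t =>
    rw [Finsupp.mapDomain_single, ← X, contraction_X, pairing_eq_sum_monomial, coeff_sum, ne_eq,
      Finset.sum_eq_zero_iff]
    intro h
    simpa using h t.2 (Finset.mem_univ _)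

lemma map_contraction {R S : Type*} [CommSemiring R] [CommSemiring S] (f : R →+* S)
    (F : MvPolynomial (α × β) R) :
    map f (contraction α β R n F) = contraction α β S n (map f F) := by
  induction F using MvPolynomial.induction_on with
  | C a => simp [contraction]
  | add F G hF hG => simp only [map_add, hF, hG]
  | mul_X F s hF => simp only [map_mul, hF, map_X, contraction_X, pairing, map_sum]

lemma coeff_layeredExponent_contraction_ne_zero (R : Type*) [CommSemiring R] [CharZero R]
    (M : (α × β) × Fin n →₀ ℕ) :
    coeff (layeredExponent M)
      (contraction α β R n (monomial (M.mapDomain Prod.fst) 1)) ≠ 0 := by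
  have hmap := map_contraction (n := n) (Nat.castRingHom R) (monomial (M.mapDomain Prod.fst) 1)
  rw [map_monomial, map_one (Nat.castRingHom R)] at hmap
  rw [← hmap, coeff_map]
  exact Nat.cast_ne_zero.2 (coeff_layeredExponent_contraction_nat_ne_zero M)

section SecondFundamentalTheorem

variable [LinearOrder α] [LinearOrder β] [WellFoundedGT α] [WellFoundedGT β]

lemma rowMajorOrder_le_of_layeredExponent_eq {M M' : (α × β) × Fin n →₀ ℕ}
    (hM : ∀ k, DiagonalFree (layer k M)) (h : layeredExponent M = layeredExponent M') :
    M.mapDomain Prod.fst ≼[rowMajorOrder α β] M'.mapDomain Prod.fst := by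
  rw [← sum_layer, ← sum_layer, map_sum, map_sum]
  exact Finset.sum_le_sum fun k _ => (hM k).rowMajorOrder_le <| by
    rw [← layer_layeredExponent, h, layer_layeredExponent]

lemma eq_zero_of_contraction_eq_zero {R : Type*} [CommRing R] [CharZero R] [NoZeroDivisors R]
    {g : MvPolynomial (α × β) R}
    (hg : ∀ c ∈ g.support, ∀ (x : Fin (n + 1) → α) (y : Fin (n + 1) → β),
      StrictMono x → StrictMono y → ¬ diagonalExponent x y ≤ c)
    (hker : contraction α β R n g = 0) : g = 0 := by
  by_contra hne
  set m := (rowMajorOrder α β).degree g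
  have hm : m ∈ g.support := (rowMajorOrder α β).degree_mem_support hne
  obtain ⟨M, hMm, hM⟩ := exists_diagonalFree_layering (hg m hm)
  have hmonomial (c : α × β →₀ ℕ) : contraction α β R n (monomial c (coeff c g)) =
      coeff c g • contraction α β R n (monomial c 1) := by
    rw [← map_smul, smul_monomial, smul_eq_mul, mul_one]
  -- The layering of `m` is diagonal-free, so any other monomial contributing here exceeds `m`.
  have hcoeff : coeff (layeredExponent M) (contraction α β R n g) =
      coeff m g * coeff (layeredExponent M) (contraction α β R n (monomial m 1)) := by
    conv_lhs => rw [g.as_sum]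
    rw [map_sum, coeff_sum, Finset.sum_eq_single_of_mem m hm]
    · rw [hmonomial, coeff_smul, smul_eq_mul]
    · refine fun c hc hcm => by_contra fun hcoeff => hcm ?_
      rw [hmonomial, coeff_smul, smul_eq_mul] at hcoeff
      obtain ⟨M', hM'c, hM'⟩ := exists_layeredExponent_eq_of_mem_support c _
        (mem_support_iff.2 (right_ne_zero_of_mul hcoeff))
      have hle := rowMajorOrder_le_of_layeredExponent_eq hM hM'.symm
      rw [hMm, hM'c] at hle
      exact (rowMajorOrder α β).toSyn.injective (((rowMajorOrder α β).le_degree hc).antisymm hle)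
  rw [hker, coeff_zero] at hcoeff
  exact mul_ne_zero (mem_support_iff.1 hm)
    (hMm ▸ coeff_layeredExponent_contraction_ne_zero R M) hcoeff.symm

end SecondFundamentalTheorem

theorem ker_contraction (α β R : Type*) [CommRing R] [CharZero R] [NoZeroDivisors R] (n : ℕ) :
    RingHom.ker (contraction α β R n) = determinantalIdeal α β R (n + 1) := by
  refine le_antisymm (fun f hf => ?_) (determinantalIdeal_le_ker_contraction R)
  obtain ⟨_, _⟩ := exists_wellFoundedGT α
  obtain ⟨_, _⟩ := exists_wellFoundedGT β
  obtain ⟨g, hfg, hg⟩ := exists_remainder_mod_determinantalIdeal R (n + 1) f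
  have hker : contraction α β R n g = 0 := by
    have h : contraction α β R n (f - g) = 0 := determinantalIdeal_le_ker_contraction R hfg
    rwa [map_sub, (RingHom.mem_ker).1 hf, zero_sub, neg_eq_zero] at h
  rwa [eq_zero_of_contraction_eq_zero hg hker, sub_zero] at hfg

end Contraction

section Fischer

lemma exists_mem_sub_mem_orthogonal {𝕜 V : Type*} [Field 𝕜] [AddCommGroup V] [Module 𝕜 V]
    {B : LinearMap.BilinForm 𝕜 V} (hB : ∀ v, B v v = 0 → v = 0) (W : Submodule 𝕜 V)
    [FiniteDimensional 𝕜 W] (v : V) : ∃ w ∈ W, v - w ∈ B.orthogonal W := by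
  let T : W →ₗ[𝕜] Module.Dual 𝕜 W := (B.restrict W).flip
  have hinj : Function.Injective T := by
    refine (injective_iff_map_eq_zero T).2 fun w hw => Subtype.ext (hB w ?_)
    exact LinearMap.congr_fun hw w
  have hsurj : Function.Surjective T :=
    (LinearMap.injective_iff_surjective_of_finrank_eq_finrank Subspace.dual_finrank_eq.symm).1 hinj
  obtain ⟨w, hw⟩ := hsurj (B.flip v ∘ₗ W.subtype)
  refine ⟨w, w.2, fun u hu => ?_⟩
  have huw : B u w = B u v := LinearMap.congr_fun hw ⟨u, hu⟩
  exact (map_sub (B u) v w).trans (sub_eq_zero.2 huw.symm)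

variable {σ : Type*}

/-- The Fischer inner product on polynomials, for which distinct monomials are orthogonal and
`⟨X ^ m, X ^ m⟩ = m!`. -/
def fischerForm (σ R : Type*) [CommSemiring R] : LinearMap.BilinForm R (MvPolynomial σ R) :=
  (basisMonomials σ R).constr R fun m => ((m.prod fun _ e => e.factorial : ℕ) : R) • lcoeff R m

lemma prod_factorial_add_single (m : σ →₀ ℕ) (v : σ) :
    ((m + Finsupp.single v 1).prod fun _ e => e.factorial) =
      (m v + 1) * m.prod fun _ e => e.factorial := by
  rw [← Finsupp.mul_prod_erase' _ v _ fun _ => rfl, ← Finsupp.mul_prod_erase' m v _ fun _ => rfl,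
    Finsupp.erase_add, Finsupp.erase_single, add_zero, Finsupp.add_apply, Finsupp.single_eq_same,
    Nat.factorial_succ, mul_assoc]

section CommSemiring

variable {R : Type*} [CommSemiring R]

lemma fischerForm_monomial (m : σ →₀ ℕ) (a : R) (g : MvPolynomial σ R) :
    fischerForm σ R (monomial m a) g =
      a * ((m.prod fun _ e => e.factorial : ℕ) * coeff m g) := by
  have hbasis : monomial m a = a • basisMonomials σ R m := by
    rw [coe_basisMonomials, smul_monomial, smul_eq_mul, mul_one]
  rw [hbasis, map_smul, fischerForm, Module.Basis.constr_basis]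
  rfl

lemma fischerForm_apply (f g : MvPolynomial σ R) :
    fischerForm σ R f g =
      ∑ m ∈ f.support, coeff m f * ((m.prod fun _ e => e.factorial : ℕ) * coeff m g) := by
  conv_lhs => rw [f.as_sum]
  simp only [map_sum, LinearMap.sum_apply, fischerForm_monomial]

lemma fischerForm_comm (f g : MvPolynomial σ R) :
    fischerForm σ R f g = fischerForm σ R g f := by
  induction f using induction_on' with
  | monomial m a =>
    rw [fischerForm_monomial, fischerForm_apply, Finset.sum_eq_single m]
    · rw [coeff_monomial, if_pos rfl]
      ring
    · intro m' _ hm'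
      rw [coeff_monomial, if_neg hm'.symm, mul_zero, mul_zero]
    · intro hm
      rw [notMem_support_iff.1 hm, zero_mul]
  | add f f' hf hf' => rw [map_add, map_add, LinearMap.add_apply, hf, hf']

lemma fischerForm_eq_zero_of_disjoint {f g : MvPolynomial σ R}
    (h : Disjoint f.support g.support) : fischerForm σ R f g = 0 := by
  rw [fischerForm_apply]
  refine Finset.sum_eq_zero fun m hm => ?_
  rw [notMem_support_iff.1 (Finset.disjoint_left.1 h hm), mul_zero, mul_zero]

lemma fischerForm_X_mul (v : σ) (f g : MvPolynomial σ R) :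
    fischerForm σ R (X v * f) g = fischerForm σ R f (pderiv v g) := by
  induction f using induction_on' with
  | monomial m a =>
    rw [X, monomial_mul, one_mul, add_comm, fischerForm_monomial, fischerForm_monomial,
      coeff_pderiv, prod_factorial_add_single]
    push_cast
    ring
  | add f f' hf hf' =>
    rw [mul_add, map_add, map_add, LinearMap.add_apply, LinearMap.add_apply, hf, hf']

end CommSemiring

section OrderedField

variable {𝕜 : Type*} [Field 𝕜] [LinearOrder 𝕜] [IsStrictOrderedRing 𝕜]

lemma fischerForm_self_pos {f : MvPolynomial σ 𝕜} (hf : f ≠ 0) : 0 < fischerForm σ 𝕜 f f := by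
  rw [fischerForm_apply]
  refine Finset.sum_pos (fun m hm => ?_) (support_nonempty.2 hf)
  have hfactorial : 0 < m.prod fun _ e => e.factorial :=
    Finset.prod_pos fun _ _ => Nat.factorial_pos _
  have hcoeff : 0 < coeff m f * coeff m f := mul_self_pos.2 (mem_support_iff.1 hm)
  rw [mul_left_comm]
  exact mul_pos (Nat.cast_pos.2 hfactorial) hcoeff

-- Projecting within the graded pieces that meet a polynomial reduces to finite dimension.
lemma isCompl_orthogonal_fischerForm {δ τ : Type*} (d : (σ →₀ ℕ) → δ)
    (hd : ∀ e, (d ⁻¹' {e}).Finite) (e : τ → δ) (f : τ → MvPolynomial σ 𝕜)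
    (hf : ∀ t, ∀ w ∈ (f t).support, d w = e t) :
    IsCompl (Submodule.span 𝕜 (Set.range f))
      ((fischerForm σ 𝕜).orthogonal (Submodule.span 𝕜 (Set.range f))) := by
  set A := Submodule.span 𝕜 (Set.range f)
  have hdef (g : MvPolynomial σ 𝕜) (hg : fischerForm σ 𝕜 g g = 0) : g = 0 :=
    by_contra fun hne => (fischerForm_self_pos hne).ne' hg
  refine ⟨Submodule.disjoint_def.2 fun g hgA hg => hdef g (hg g hgA), ?_⟩
  refine codisjoint_iff.2 (eq_top_iff.2 fun g _ => ?_)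
  set T : Set (σ →₀ ℕ) := d ⁻¹' (d '' g.support)
  have hgT : g ∈ restrictSupport 𝕜 T := Set.subset_preimage_image d _
  have hT : T.Finite := (g.support.finite_toSet.image d).preimage' fun e _ => hd e
  have := hT.to_subtype
  have hfd : FiniteDimensional 𝕜 (restrictSupport 𝕜 T) :=
    Module.Finite.of_basis (basisRestrictSupport 𝕜 T)
  have := Submodule.finiteDimensional_inf_right A (restrictSupport 𝕜 T)
  obtain ⟨g₁, ⟨hg₁A, hg₁T⟩, hg₁⟩ :=
    exists_mem_sub_mem_orthogonal hdef (A ⊓ restrictSupport 𝕜 T) g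
  refine Submodule.mem_sup.2 ⟨g₁, hg₁A, g - g₁, ?_, add_sub_cancel g₁ g⟩
  have hrange : Set.range f ⊆ LinearMap.ker ((fischerForm σ 𝕜).flip (g - g₁)) := by
    rintro _ ⟨t, rfl⟩
    by_cases ht : e t ∈ d '' g.support
    · have hftT : f t ∈ restrictSupport 𝕜 T := fun w hw => by
        rwa [Set.mem_preimage, hf t w hw]
      exact hg₁ (f t) ⟨Submodule.subset_span ⟨t, rfl⟩, hftT⟩
    · have hsub : g - g₁ ∈ restrictSupport 𝕜 T := sub_mem hgT hg₁T
      rw [SetLike.mem_coe, LinearMap.mem_ker, LinearMap.BilinForm.flip_apply]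
      refine fischerForm_eq_zero_of_disjoint (Finset.disjoint_left.2 fun w hw hw' => ht ?_)
      rw [← hf t w hw]
      exact hsub hw'
  exact fun h hh => Submodule.span_le.2 hrange hh

end OrderedField

end Fischer

section Reynolds

variable {α β : Type*} {n : ℕ}

lemma finite_setOf_mapDomain_fst_eq {γ : Type*} (e : γ →₀ ℕ) :
    ((fun w : γ × Fin n →₀ ℕ => w.mapDomain Prod.fst) ⁻¹' {e}).Finite := by
  let layers (w : γ × Fin n →₀ ℕ) (k : Fin n) : γ →₀ ℕ := layer k w
  have hinj : Function.Injective layers := fun w w' h => Finsupp.ext fun s => by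
    have hs : layer s.2 w = layer s.2 w' := congrFun h s.2
    rw [← layer_apply s.2 w s.1, hs, layer_apply]
  refine ((Set.Finite.pi' fun _ => Set.finite_Iic e).preimage hinj.injOn).subset ?_
  rintro w rfl k
  refine Set.mem_Iic.2 (le_of_le_of_eq ?_ (sum_layer w))
  exact Finset.single_le_sum (f := layers w) (fun _ _ => zero_le) (Finset.mem_univ k)

lemma mapDomain_fst_layeredExponent (M : (α × β) × Fin n →₀ ℕ) :
    (layeredExponent M).mapDomain Prod.fst = margins (M.mapDomain Prod.fst) := by
  simp only [layeredExponent, margins, Finsupp.mapDomain_add, ← Finsupp.mapDomain_comp]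
  rfl

lemma range_contraction_eq_span (R : Type*) [CommSemiring R] :
    Subalgebra.toSubmodule (contraction α β R n).range =
      Submodule.span R (Set.range fun m => contraction α β R n (monomial m 1)) := by
  have hrange : Subalgebra.toSubmodule (contraction α β R n).range =
      LinearMap.range (contraction α β R n).toLinearMap := rfl
  rw [hrange, LinearMap.range_eq_map, ← (basisMonomials (α × β) R).span_eq, Submodule.map_span,
    ← Set.range_comp, coe_basisMonomials]
  rfl

lemma isCompl_range_contraction (𝕜 : Type*) [Field 𝕜] [LinearOrder 𝕜] [IsStrictOrderedRing 𝕜] :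
    IsCompl (Subalgebra.toSubmodule (contraction α β 𝕜 n).range)
      ((fischerForm _ 𝕜).orthogonal (Subalgebra.toSubmodule (contraction α β 𝕜 n).range)) := by
  rw [range_contraction_eq_span]
  refine isCompl_orthogonal_fischerForm (fun w => w.mapDomain Prod.fst)
    finite_setOf_mapDomain_fst_eq margins _ fun m w hw => ?_
  obtain ⟨M, rfl, rfl⟩ := exists_layeredExponent_eq_of_mem_support m w hw
  exact mapDomain_fst_layeredExponent M

section Polarization

variable (R : Type*) [CommSemiring R]

/-- The polarization operator `∑ k, X (b, k) ∂(a, k)`, the infinitesimal substitution of the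
`b`-th vector for the `a`-th one. -/
def polarization {γ : Type*} (n : ℕ) (a b : γ) :
    Derivation R (MvPolynomial (γ × Fin n) R) (MvPolynomial (γ × Fin n) R) :=
  ∑ k, (X (b, k) : MvPolynomial (γ × Fin n) R) • pderiv (a, k)

lemma polarization_apply {γ : Type*} (a b : γ) (f : MvPolynomial (γ × Fin n) R) :
    polarization R n a b f = ∑ k, X (b, k) * pderiv (a, k) f := by
  rw [polarization, ← Derivation.coeFnAddMonoidHom_apply, map_sum, Finset.sum_apply]
  rfl

lemma pderiv_inl_pairing (i i' : α) (j : β) (k : Fin n) :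
    pderiv (Sum.inl i, k) (pairing R n i' j) = if i = i' then X (Sum.inr j, k) else 0 := by
  simp [pairing, pderiv_X, Pi.single_apply, eq_comm, ite_and]

lemma pderiv_inr_pairing (i : α) (j j' : β) (k : Fin n) :
    pderiv (Sum.inr j, k) (pairing R n i j') = if j = j' then X (Sum.inl i, k) else 0 := by
  simp [pairing, pderiv_X, Pi.single_apply, eq_comm, ite_and]

lemma polarization_inl_pairing (i i' a : α) (j : β) :
    polarization R n (Sum.inl i) (Sum.inl a) (pairing R n i' j) =
      if i = i' then pairing R n a j else 0 := by
  simp only [polarization_apply, pderiv_inl_pairing]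
  split_ifs <;> simp [pairing]

lemma polarization_inr_pairing (i : α) (j j' b : β) :
    polarization R n (Sum.inr j) (Sum.inr b) (pairing R n i j') =
      if j = j' then pairing R n i b else 0 := by
  simp only [polarization_apply, pderiv_inr_pairing]
  split_ifs <;> simp [pairing, mul_comm]

lemma derivation_mem_range {σ A : Type*} [CommSemiring A] [Algebra R A]
    (φ : MvPolynomial σ R →ₐ[R] A) (D : Derivation R A A) (hD : ∀ s, D (φ (X s)) ∈ φ.range)
    (F : MvPolynomial σ R) : D (φ F) ∈ φ.range := by
  induction F using MvPolynomial.induction_on with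
  | C a =>
    rw [← algebraMap_eq, AlgHom.commutes, D.map_algebraMap]
    exact zero_mem _
  | add F G hF hG =>
    rw [map_add, map_add]
    exact add_mem hF hG
  | mul_X F s hF =>
    rw [map_mul, D.leibniz, smul_eq_mul, smul_eq_mul]
    exact add_mem (mul_mem ⟨F, rfl⟩ (hD s)) (mul_mem ⟨X s, rfl⟩ hF)

lemma pairing_mem_range_contraction (i : α) (j : β) :
    pairing R n i j ∈ (contraction α β R n).range :=
  ⟨X (i, j), contraction_X R (i, j)⟩

lemma polarization_inl_contraction_mem_range (i a : α) (F : MvPolynomial (α × β) R) :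
    polarization R n (Sum.inl i) (Sum.inl a) (contraction α β R n F) ∈
      (contraction α β R n).range := by
  refine derivation_mem_range R _ _ (fun s => ?_) F
  rw [contraction_X, polarization_inl_pairing]
  split_ifs
  exacts [pairing_mem_range_contraction R a s.2, zero_mem _]

lemma polarization_inr_contraction_mem_range (j b : β) (F : MvPolynomial (α × β) R) :
    polarization R n (Sum.inr j) (Sum.inr b) (contraction α β R n F) ∈
      (contraction α β R n).range := by
  refine derivation_mem_range R _ _ (fun s => ?_) F
  rw [contraction_X, polarization_inr_pairing]
  split_ifs
  exacts [pairing_mem_range_contraction R s.1 b, zero_mem _]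

/-- The differential operator `∑ k, ∂(inl i, k) ∂(inr j, k)`, adjoint to multiplication by
`pairing R n i j` for the Fischer inner product. -/
def pairingAdjoint (n : ℕ) (i : α) (j : β) :
    MvPolynomial ((α ⊕ β) × Fin n) R →ₗ[R] MvPolynomial ((α ⊕ β) × Fin n) R :=
  ∑ k, (pderiv (Sum.inl i, k)).toLinearMap ∘ₗ (pderiv (Sum.inr j, k)).toLinearMap

lemma pairingAdjoint_apply (i : α) (j : β) (f : MvPolynomial ((α ⊕ β) × Fin n) R) :
    pairingAdjoint R n i j f = ∑ k, pderiv (Sum.inl i, k) (pderiv (Sum.inr j, k) f) :=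
  LinearMap.sum_apply _ _ _

lemma fischerForm_pairing_mul (i : α) (j : β) (f g : MvPolynomial ((α ⊕ β) × Fin n) R) :
    fischerForm _ R (pairing R n i j * f) g = fischerForm _ R f (pairingAdjoint R n i j g) := by
  rw [pairing, Finset.sum_mul, map_sum, LinearMap.sum_apply, pairingAdjoint_apply, map_sum]
  refine Finset.sum_congr rfl fun k _ => ?_
  rw [mul_comm (X _), mul_assoc, fischerForm_X_mul, fischerForm_X_mul]

lemma pairingAdjoint_mul_pairing (i a : α) (j b : β) (f : MvPolynomial ((α ⊕ β) × Fin n) R) :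
    pairingAdjoint R n i j (f * pairing R n a b) =
      pairingAdjoint R n i j f * pairing R n a b
        + (if i = a then polarization R n (Sum.inr j) (Sum.inr b) f else 0)
        + (if j = b then polarization R n (Sum.inl i) (Sum.inl a) f else 0)
        + (if i = a ∧ j = b then n • f else 0) := by
  have hterm (k : Fin n) :
      pderiv (Sum.inl i, k) (pderiv (Sum.inr j, k) (f * pairing R n a b)) =
        pderiv (Sum.inl i, k) (pderiv (Sum.inr j, k) f) * pairing R n a b
          + (if i = a then X (Sum.inr b, k) * pderiv (Sum.inr j, k) f else 0)
          + (if j = b then X (Sum.inl a, k) * pderiv (Sum.inl i, k) f else 0)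
          + (if i = a ∧ j = b then f else 0) := by
    rw [Derivation.leibniz, pderiv_inr_pairing, map_add, smul_eq_mul, smul_eq_mul,
      Derivation.leibniz (pderiv _) (pairing R n a b), pderiv_inl_pairing]
    by_cases hi : i = a <;> by_cases hj : j = b <;>
      simp [hi, hj, Derivation.leibniz, pderiv_X] <;> ring
  simp only [pairingAdjoint_apply, polarization_apply, hterm, Finset.sum_add_distrib,
    Finset.sum_mul]
  split_ifs <;> simp

lemma pairingAdjoint_contraction_mem_range (i : α) (j : β) (F : MvPolynomial (α × β) R) :
    pairingAdjoint R n i j (contraction α β R n F) ∈ (contraction α β R n).range := by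
  induction F using MvPolynomial.induction_on with
  | C a =>
    have hC : contraction α β R n (C a) = C a := aeval_C _ a
    simp only [hC, pairingAdjoint_apply, pderiv_C, map_zero, Finset.sum_const_zero, zero_mem]
  | add F G hF hG =>
    rw [map_add, map_add]
    exact add_mem hF hG
  | mul_X F s hF =>
    rw [map_mul, contraction_X, pairingAdjoint_mul_pairing]
    refine add_mem (add_mem (add_mem (mul_mem hF (pairing_mem_range_contraction R _ _)) ?_) ?_) ?_
    all_goals split_ifs
    exacts [polarization_inr_contraction_mem_range R j s.2 F, zero_mem _,
      polarization_inl_contraction_mem_range R i s.1 F, zero_mem _,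
      nsmul_mem (AlgHom.mem_range_self _ F) n, zero_mem _]

end Polarization

/-- A linear projection onto the algebra generated by the contractions that commutes with
multiplication by contractions, like the Reynolds operator of `GL n`, whose invariants these are. -/
structure IsReynoldsOperator {R : Type*} [CommSemiring R]
    (π : MvPolynomial ((α ⊕ β) × Fin n) R →ₗ[R] MvPolynomial ((α ⊕ β) × Fin n) R) : Prop where
  mem_range (g) : π g ∈ (contraction α β R n).range
  map_contraction (F) : π (contraction α β R n F) = contraction α β R n F
  map_pairing_mul (i j g) : π (pairing R n i j * g) = pairing R n i j * π g

lemma isReynoldsOperator_projection (𝕜 : Type*) [Field 𝕜] [LinearOrder 𝕜]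
    [IsStrictOrderedRing 𝕜] :
    IsReynoldsOperator (Submodule.projection _ _ (isCompl_range_contraction (α := α) (β := β)
      (n := n) 𝕜)) where
  mem_range g := (Subalgebra.mem_toSubmodule _).1 (Submodule.projection_apply_mem _ g)
  map_contraction F := Submodule.projection_apply_of_mem_left _ ⟨F, rfl⟩
  map_pairing_mul i j g := by
    set hcompl := isCompl_range_contraction (α := α) (β := β) (n := n) 𝕜
    set π := Submodule.projection _ _ hcompl
    have hπg : π g ∈ (contraction α β 𝕜 n).range :=
      (Subalgebra.mem_toSubmodule _).1 (Submodule.projection_apply_mem hcompl g)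
    have hmem : pairing 𝕜 n i j * π g ∈ Subalgebra.toSubmodule (contraction α β 𝕜 n).range :=
      mul_mem (S := Subalgebra _ _) (pairing_mem_range_contraction 𝕜 i j) hπg
    have hortho : pairing 𝕜 n i j * (g - π g) ∈ (fischerForm _ 𝕜).orthogonal
        (Subalgebra.toSubmodule (contraction α β 𝕜 n).range) := by
      rintro _ ⟨G, rfl⟩
      rw [fischerForm_comm, fischerForm_pairing_mul, fischerForm_comm]
      exact Submodule.sub_projection_mem hcompl g _ (pairingAdjoint_contraction_mem_range 𝕜 i j G)
    rw [← add_sub_cancel (π g) g, mul_add, map_add,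
      Submodule.projection_apply_of_mem_left hcompl hmem,
      (Submodule.projection_apply_eq_zero_iff hcompl).2 hortho, add_zero, add_sub_cancel]

lemma map_pairing {R S : Type*} [CommSemiring R] [CommSemiring S] (f : R →+* S) (i : α) (j : β) :
    map f (pairing R n i j) = pairing S n i j := by
  simp only [pairing, map_sum, map_mul, map_X]

section ScalarExtension

variable {σ τ k R : Type*} [CommSemiring k] [CommSemiring R] [Algebra k R]

/-- The `R`-linear extension of a `k`-linear map between polynomial spaces over `k`. -/
def scalarExtension (R : Type*) [CommSemiring R] [Algebra k R]
    (π : MvPolynomial σ k →ₗ[k] MvPolynomial τ k) : MvPolynomial σ R →ₗ[R] MvPolynomial τ R :=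
  (basisMonomials σ R).constr R fun w => map (algebraMap k R) (π (monomial w 1))

lemma scalarExtension_map (π : MvPolynomial σ k →ₗ[k] MvPolynomial τ k) (g : MvPolynomial σ k) :
    scalarExtension R π (map (algebraMap k R) g) = map (algebraMap k R) (π g) := by
  induction g using induction_on' with
  | monomial w a =>
    have hw : monomial w (algebraMap k R a) = algebraMap k R a • basisMonomials σ R w := by
      rw [coe_basisMonomials, smul_monomial, smul_eq_mul, mul_one]
    rw [map_monomial, hw, map_smul, scalarExtension, Module.Basis.constr_basis, smul_eq_C_mul,
      ← map_C, ← map_mul, ← smul_eq_C_mul, ← map_smul, smul_monomial, smul_eq_mul, mul_one]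
  | add g g' hg hg' => simp only [map_add, hg, hg']

lemma span_range_map_algebraMap (k R : Type*) [CommSemiring k] [CommSemiring R] [Algebra k R] :
    Submodule.span R (Set.range (map (algebraMap k R) : MvPolynomial σ k → MvPolynomial σ R)) =
      ⊤ := by
  rw [eq_top_iff, ← (basisMonomials σ R).span_eq, Submodule.span_le]
  rintro _ ⟨w, rfl⟩
  refine Submodule.subset_span ⟨monomial w 1, ?_⟩
  rw [map_monomial, (algebraMap k R).map_one, coe_basisMonomials]

lemma isReynoldsOperator_scalarExtension
    {π : MvPolynomial ((α ⊕ β) × Fin n) k →ₗ[k] MvPolynomial ((α ⊕ β) × Fin n) k}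
    (hπ : IsReynoldsOperator π) : IsReynoldsOperator (scalarExtension R π) where
  mem_range g := by
    suffices hle : Submodule.span R (Set.range (map (algebraMap k R))) ≤
        (Subalgebra.toSubmodule (contraction α β R n).range).comap (scalarExtension R π) from
      hle ((span_range_map_algebraMap k R).ge Submodule.mem_top)
    rw [Submodule.span_le]
    rintro _ ⟨g, rfl⟩
    obtain ⟨F, hF⟩ := hπ.mem_range g
    refine ⟨map (algebraMap k R) F, ?_⟩
    exact (map_contraction _ F).symm.trans
      ((congrArg _ hF).trans (scalarExtension_map π g).symm)
  map_contraction F := by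
    have hext : scalarExtension R π ∘ₗ (contraction α β R n).toLinearMap =
        (contraction α β R n).toLinearMap :=
      LinearMap.ext_on_range (span_range_map_algebraMap k R) fun F => by
        rw [LinearMap.comp_apply, AlgHom.toLinearMap_apply, ← map_contraction,
          scalarExtension_map, hπ.map_contraction]
    exact LinearMap.congr_fun hext F
  map_pairing_mul i j g := by
    have hext : scalarExtension R π ∘ₗ LinearMap.mulLeft R (pairing R n i j) =
        LinearMap.mulLeft R (pairing R n i j) ∘ₗ scalarExtension R π :=
      LinearMap.ext_on_range (span_range_map_algebraMap k R) fun g => by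
        simp only [LinearMap.comp_apply, LinearMap.mulLeft_apply, scalarExtension_map,
          ← map_pairing (algebraMap k R), ← map_mul, hπ.map_pairing_mul]
    exact LinearMap.congr_fun hext g

end ScalarExtension

theorem exists_isReynoldsOperator (α β R : Type*) [CommSemiring R] [Algebra ℚ R] (n : ℕ) :
    ∃ π : MvPolynomial ((α ⊕ β) × Fin n) R →ₗ[R] MvPolynomial ((α ⊕ β) × Fin n) R,
      IsReynoldsOperator π :=
  ⟨_, isReynoldsOperator_scalarExtension (isReynoldsOperator_projection ℚ)⟩

theorem mem_sup_span_of_contraction_mem_span {R κ : Type*} [CommRing R] [Algebra ℚ R]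
    (x : κ → α) (y : κ → β) {F : MvPolynomial (α × β) R}
    (hF : contraction α β R n F ∈ Ideal.span (Set.range fun k => pairing R n (x k) (y k))) :
    F ∈ RingHom.ker (contraction α β R n) ⊔ Ideal.span (Set.range fun k => X (x k, y k)) := by
  obtain ⟨π, hπ⟩ := exists_isReynoldsOperator α β R n
  obtain ⟨c, hc⟩ := Finsupp.mem_span_range_iff_exists_finsupp.1 hF
  choose G hG using fun k => hπ.mem_range (c k)
  have hFG : contraction α β R n F = contraction α β R n (c.sum fun k _ => G k * X (x k, y k)) := by
    calc contraction α β R n F = π (contraction α β R n F) := (hπ.map_contraction F).symm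
      _ = c.sum fun k a => π a * pairing R n (x k) (y k) := by
        simp only [← hc, Finsupp.sum, map_sum, smul_eq_mul, mul_comm _ (pairing _ _ _ _),
          hπ.map_pairing_mul]
      _ = _ := by
        simp only [Finsupp.sum, map_sum, map_mul, contraction_X, ← hG]
        rfl
  rw [← sub_add_cancel F (c.sum fun k _ => G k * X (x k, y k))]
  refine Submodule.add_mem_sup ?_ ?_
  · rw [RingHom.mem_ker, map_sub, hFG, sub_self]
  · exact Submodule.sum_mem _ fun k _ => Ideal.mul_mem_left _ _ (Ideal.subset_span ⟨k, rfl⟩)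

end Reynolds

section HyperbolaIdeal

variable {ι : Type*} {R : Type*} [CommRing R] {p : ι → R}

/-- The ideal of the relations `X (Sum.inl i) * X (Sum.inr i) = p i`. -/
def hyperbolaIdeal (p : ι → R) : Ideal (MvPolynomial (ι ⊕ ι) R) :=
  Ideal.span (Set.range fun i => X (Sum.inl i) * X (Sum.inr i) - C (p i))

/-- The parametrization `i ↦ (t i, p i / t i)` of the zero locus of `hyperbolaIdeal p` by Laurent
polynomials in the `t i`. -/
def hyperbolaParam (p : ι → R) : MvPolynomial (ι ⊕ ι) R →ₐ[R] AddMonoidAlgebra R (ι →₀ ℤ) :=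
  aeval (Sum.elim (fun i => AddMonoidAlgebra.single (Finsupp.single i 1) 1)
    (fun i => AddMonoidAlgebra.single (-Finsupp.single i 1) (p i)))

/-- The Laurent exponent of the image of a monomial under `hyperbolaParam`. -/
def hyperbolaWeight : (ι ⊕ ι →₀ ℕ) →+ (ι →₀ ℤ) :=
  (Finsupp.mapRange.addMonoidHom (Nat.castAddMonoidHom ℤ)).comp
      (Finsupp.comapDomain.addMonoidHom Sum.inl_injective) -
    (Finsupp.mapRange.addMonoidHom (Nat.castAddMonoidHom ℤ)).comp
      (Finsupp.comapDomain.addMonoidHom Sum.inr_injective)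

/-- The monomial is divisible by no product `X (Sum.inl i) * X (Sum.inr i)`. -/
def HyperbolaReduced (m : ι ⊕ ι →₀ ℕ) : Prop :=
  ∀ i, m (Sum.inl i) = 0 ∨ m (Sum.inr i) = 0

lemma hyperbolaWeight_apply (m : ι ⊕ ι →₀ ℕ) (i : ι) :
    hyperbolaWeight m i = m (Sum.inl i) - m (Sum.inr i) := rfl

lemma injOn_hyperbolaWeight : Set.InjOn (hyperbolaWeight (ι := ι)) {m | HyperbolaReduced m} := by
  intro m hm m' hm' h
  have hi (i : ι) : m (Sum.inl i) = m' (Sum.inl i) ∧ m (Sum.inr i) = m' (Sum.inr i) := by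
    have := DFunLike.congr_fun h i
    rw [hyperbolaWeight_apply, hyperbolaWeight_apply] at this
    have := hm i
    have := hm' i
    lia
  exact Finsupp.ext (Sum.rec (fun i => (hi i).1) fun i => (hi i).2)

lemma hyperbolaParam_monomial [IsDomain R] (hp : ∀ i, p i ≠ 0) (m : ι ⊕ ι →₀ ℕ) :
    ∃ c ≠ 0, ∀ a, hyperbolaParam p (monomial m a) =
      AddMonoidAlgebra.single (hyperbolaWeight m) (a * c) := by
  suffices ∃ c ≠ 0, hyperbolaParam p (monomial m 1) =
      AddMonoidAlgebra.single (hyperbolaWeight m) c by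
    obtain ⟨c, hc, h⟩ := this
    refine ⟨c, hc, fun a => ?_⟩
    rw [← mul_one a, ← smul_eq_mul, ← smul_monomial, map_smul, h, AddMonoidAlgebra.smul_single]
    simp
  induction m using exponent_induction with
  | zero => exact ⟨1, one_ne_zero, by rw [map_zero]; exact map_one (hyperbolaParam p)⟩
  | add m m' hm hm' =>
    obtain ⟨c, hc, h⟩ := hm
    obtain ⟨c', hc', h'⟩ := hm'
    refine ⟨c * c', mul_ne_zero hc hc', ?_⟩
    rw [← one_mul (1 : R), ← monomial_mul, map_mul, h, h', AddMonoidAlgebra.single_mul_single,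
      map_add]
  | single_one s =>
    have hX : hyperbolaParam p (monomial (Finsupp.single s 1) 1) = hyperbolaParam p (X s) := rfl
    rw [hX, hyperbolaParam, aeval_X]
    obtain i | i := s
    · refine ⟨1, one_ne_zero, congrArg (AddMonoidAlgebra.single · 1) (Finsupp.ext fun j => ?_)⟩
      simp [hyperbolaWeight_apply, Finsupp.single_apply]
    · refine ⟨p i, hp i, congrArg (AddMonoidAlgebra.single · (p i)) (Finsupp.ext fun j => ?_)⟩
      simp [hyperbolaWeight_apply, Finsupp.single_apply]

lemma hyperbolaIdeal_le_ker_hyperbolaParam :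
    hyperbolaIdeal p ≤ RingHom.ker (hyperbolaParam p) := by
  refine Ideal.span_le.2 ?_
  rintro _ ⟨i, rfl⟩
  simp [hyperbolaParam, RingHom.mem_ker, AddMonoidAlgebra.single_mul_single]

lemma exists_hyperbolaReduced_of_monomial (p : ι → R) (m : ι ⊕ ι →₀ ℕ) (a : R) :
    ∃ m' b, HyperbolaReduced m' ∧ monomial m a - monomial m' b ∈ hyperbolaIdeal p := by
  induction hd : m.degree using Nat.strong_induction_on generalizing m a with
  | _ d ih =>
  by_cases hm : HyperbolaReduced m
  · exact ⟨m, a, hm, by simp⟩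
  obtain ⟨i, hi⟩ := not_forall.1 hm
  push Not at hi
  have hle : Finsupp.single (Sum.inl i) 1 + Finsupp.single (Sum.inr i) 1 ≤ m := by
    rintro (j | j) <;> simp only [Finsupp.add_apply, Finsupp.single_apply] <;> grind
  obtain ⟨m', rfl⟩ := exists_add_of_le hle
  rw [add_comm] at hd ⊢
  obtain ⟨m'', b, hm'', hb⟩ := ih _ (by simp [← hd]) m' (a * p i) rfl
  refine ⟨m'', b, hm'', ?_⟩
  have hfactor : monomial (m' + (Finsupp.single (Sum.inl i) 1 + Finsupp.single (Sum.inr i) 1)) a -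
      monomial m' (a * p i) = monomial m' a * (X (Sum.inl i) * X (Sum.inr i) - C (p i)) := by
    simp [X, mul_sub, monomial_mul, mul_comm _ (C _), C_mul_monomial, mul_comm]
  rw [← sub_add_sub_cancel, hfactor]
  exact add_mem (Ideal.mul_mem_left _ _ (Ideal.subset_span ⟨i, rfl⟩)) hb

lemma exists_hyperbolaReduced (p : ι → R) (f : MvPolynomial (ι ⊕ ι) R) :
    ∃ g, f - g ∈ hyperbolaIdeal p ∧ ∀ m ∈ g.support, HyperbolaReduced m := by
  induction f using MvPolynomial.induction_on' with
  | monomial m a =>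
    obtain ⟨m', b, hm', hb⟩ := exists_hyperbolaReduced_of_monomial p m a
    refine ⟨monomial m' b, hb, fun c hc => ?_⟩
    obtain rfl := Finset.mem_singleton.1 (support_monomial_subset hc)
    exact hm'
  | add f f' hf hf' =>
    obtain ⟨g, hfg, hg⟩ := hf
    obtain ⟨g', hfg', hg'⟩ := hf'
    refine ⟨g + g', add_sub_add_comm f f' g g' ▸ add_mem hfg hfg', fun c hc => ?_⟩
    exact (Finset.mem_union.1 (support_add hc)).elim (hg c) (hg' c)

lemma eq_zero_of_hyperbolaParam_eq_zero [IsDomain R] (hp : ∀ i, p i ≠ 0)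
    {g : MvPolynomial (ι ⊕ ι) R} (hg : ∀ m ∈ g.support, HyperbolaReduced m)
    (h : hyperbolaParam p g = 0) : g = 0 := by
  by_contra hne
  obtain ⟨m, hm⟩ := support_nonempty.2 hne
  choose c hc hparam using hyperbolaParam_monomial hp
  have hcoeff : (hyperbolaParam p g).coeff (hyperbolaWeight m) = g.coeff m * c m := by
    conv_lhs => rw [g.as_sum, map_sum]
    simp only [hparam]
    rw [AddMonoidAlgebra.coeff_sum, Finsupp.finsetSum_apply, Finset.sum_eq_single_of_mem m hm]
    · simp
    · exact fun m' hm' hne' =>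
        Finsupp.single_eq_of_ne (injOn_hyperbolaWeight.ne (hg m' hm') (hg m hm) hne').symm
  rw [h] at hcoeff
  exact mul_ne_zero (mem_support_iff.1 hm) (hc m) hcoeff.symm

theorem ker_hyperbolaParam [IsDomain R] (hp : ∀ i, p i ≠ 0) :
    RingHom.ker (hyperbolaParam p) = hyperbolaIdeal p := by
  refine le_antisymm (fun f hf => ?_) hyperbolaIdeal_le_ker_hyperbolaParam
  obtain ⟨g, hfg, hg⟩ := exists_hyperbolaReduced p f
  have hg0 : hyperbolaParam p g = 0 := by
    have := hyperbolaIdeal_le_ker_hyperbolaParam hfg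
    rwa [RingHom.mem_ker, map_sub, hf, zero_sub, neg_eq_zero] at this
  rwa [eq_zero_of_hyperbolaParam_eq_zero hp hg hg0, sub_zero] at hfg

theorem isPrime_hyperbolaIdeal [IsDomain R] (hp : ∀ i, p i ≠ 0) : (hyperbolaIdeal p).IsPrime :=
  ker_hyperbolaParam hp ▸ RingHom.ker_isPrime _

end HyperbolaIdeal

section IsotropicIdeal

variable {ι : Type*} {R : Type*} [CommRing R]

/-- The ideal generated by the contractions of each generic vector with the generic covector of
the same index. -/
def isotropicIdeal (ι R : Type*) [CommRing R] (n : ℕ) :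
    Ideal (MvPolynomial ((ι ⊕ ι) × Fin n) R) :=
  Ideal.span (Set.range fun i : ι => pairing R n i i)

lemma pairing_ne_zero [Nontrivial R] {α β : Type*} {n : ℕ} (hn : 1 ≤ n) (i : α) (j : β) :
    pairing R n i j ≠ 0 := by
  intro h
  have := congrArg (eval fun s : (α ⊕ β) × Fin n => if s.2 = ⟨0, hn⟩ then 1 else 0) h
  simp [pairing] at this

/-- The variables in dimension `m + 1` split into the first coordinates and the variables in
dimension `m`. -/
def splitFirstCoord (γ : Type*) (m : ℕ) : γ × Fin (m + 1) ≃ γ ⊕ γ × Fin m where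
  toFun s := Fin.cases (Sum.inl s.1) (fun k => Sum.inr (s.1, k)) s.2
  invFun := Sum.elim (·, 0) (Prod.map id Fin.succ)
  left_inv := fun ⟨a, k⟩ => by cases k using Fin.cases <;> rfl
  right_inv := by rintro (a | ⟨a, k⟩) <;> rfl

theorem isPrime_isotropicIdeal [IsDomain R] {n : ℕ} (hn : 2 ≤ n) :
    (isotropicIdeal ι R n).IsPrime := by
  obtain ⟨m, rfl⟩ := Nat.exists_eq_add_of_le' (one_le_two.trans hn)
  let Φ := (renameEquiv R (splitFirstCoord (ι ⊕ ι) m)).trans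
    (sumAlgEquiv R (ι ⊕ ι) ((ι ⊕ ι) × Fin m))
  have hΦ (i : ι) : Φ (pairing R (m + 1) i i) =
      X (Sum.inl i) * X (Sum.inr i) - C (-pairing R m i i) := by
    simp [Φ, pairing, Fin.sum_univ_succ, splitFirstCoord]
  have hmap : (isotropicIdeal ι R (m + 1)).map Φ = hyperbolaIdeal fun i => -pairing R m i i := by
    rw [isotropicIdeal, hyperbolaIdeal, Ideal.map_span, ← Set.range_comp]
    exact congrArg (Ideal.span <| Set.range ·) (funext hΦ)
  have : (hyperbolaIdeal fun i : ι => -pairing R m i i).IsPrime :=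
    isPrime_hyperbolaIdeal fun i => neg_ne_zero.2 (pairing_ne_zero (by lia) i i)
  rw [← Ideal.comap_map_of_bijective Φ Φ.bijective (I := isotropicIdeal ι R (m + 1)), hmap]
  exact Ideal.comap_isPrime Φ _

lemma det_coordMatrix_notMem_isotropicIdeal [Nontrivial R] {n : ℕ} {v : Fin n → ι ⊕ ι}
    (hv : Function.Injective v) : (coordMatrix R n v).det ∉ isotropicIdeal ι R n := by
  let standardFrame : (ι ⊕ ι) × Fin n → R := fun s => if v s.2 = s.1 then 1 else 0
  have hzero : isotropicIdeal ι R n ≤ RingHom.ker (eval standardFrame) := by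
    refine Ideal.span_le.2 ?_
    rintro _ ⟨i, rfl⟩
    simp only [SetLike.mem_coe, RingHom.mem_ker, pairing, map_sum, map_mul, eval_X, standardFrame]
    refine Finset.sum_eq_zero fun k _ => ?_
    by_cases hk : v k = Sum.inl i <;> simp [hk]
  have hone : eval standardFrame (coordMatrix R n v).det = 1 := by
    rw [RingHom.map_det, ← Matrix.det_one (n := Fin n)]
    congr 1
    ext k l
    simp [coordMatrix, standardFrame, Matrix.one_apply, hv.eq_iff, eq_comm]
  exact fun hmem => one_ne_zero (hone.symm.trans (hzero hmem))

end IsotropicIdeal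

section SwappingRing

variable {K : Type} [Field K] {P : Set Circle1} {n : ℕ}

/-- The map from the swapping ring to the polynomial functions of a vector and a covector at every
point of `P`, sending the generator `xy` with `x ≠ y` to the contraction `⟨x, y⟩`. -/
def swapContraction (K : Type) [Field K] (P : Set Circle1) (n : ℕ) :
    SwapRing K P →ₐ[K] MvPolynomial ((↥P ⊕ ↥P) × Fin n) K :=
  (contraction ↥P ↥P K n).comp (rename Subtype.val)

/-- The retraction from the generic `P × P` matrix onto the swapping ring, which kills the diagonal
entries. -/
def matrixToSwapRing (K : Type) [Field K] (P : Set Circle1) :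
    MvPolynomial (↥P × ↥P) K →ₐ[K] SwapRing K P :=
  aeval fun s => gen K P s.1 s.2

lemma matrixToSwapRing_rename (F : SwapRing K P) :
    matrixToSwapRing K P (rename Subtype.val F) = F := by
  rw [matrixToSwapRing, aeval_rename]
  have hgen : (fun s : ↥P × ↥P => gen K P s.1 s.2) ∘ Subtype.val = (X : SwapIdx P → SwapRing K P) :=
    funext fun s => dif_pos s.2
  rw [hgen, aeval_X_left_apply]

lemma matrixToSwapRing_genericMinor {m : ℕ} (xs ys : Fin m → ↥P) :
    matrixToSwapRing K P (genericMinor K xs ys) = Dmat K P m xs ys := by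
  rw [genericMinor, AlgHom.map_det, Dmat]
  congr 1
  ext1 k l
  simp [matrixToSwapRing]

lemma matrixToSwapRing_mem_Rideal_of_mem_determinantalIdeal {F : MvPolynomial (↥P × ↥P) K}
    (hF : F ∈ determinantalIdeal ↥P ↥P K (n + 1)) : matrixToSwapRing K P F ∈ Rideal K P n := by
  refine Ideal.span_le (I := (Rideal K P n).comap (matrixToSwapRing K P)).2 ?_ hF
  rintro _ ⟨s, rfl⟩
  exact Ideal.subset_span ⟨s.1, s.2, matrixToSwapRing_genericMinor s.1 s.2⟩

lemma matrixToSwapRing_eq_zero_of_mem_span_diagonal {F : MvPolynomial (↥P × ↥P) K}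
    (hF : F ∈ Ideal.span (Set.range fun x : ↥P => (X (x, x) : MvPolynomial (↥P × ↥P) K))) :
    matrixToSwapRing K P F = 0 := by
  refine Ideal.span_le (I := RingHom.ker (matrixToSwapRing K P)).2 ?_ hF
  rintro _ ⟨x, rfl⟩
  simp [matrixToSwapRing, gen, RingHom.mem_ker]

lemma mk_swapContraction_gen (x y : ↥P) :
    Ideal.Quotient.mk (isotropicIdeal ↥P K n) (swapContraction K P n (gen K P x y)) =
      Ideal.Quotient.mk _ (pairing K n x y) := by
  by_cases h : x = y
  · subst h
    have hmem : pairing K n x x ∈ isotropicIdeal ↥P K n := Ideal.subset_span ⟨x, rfl⟩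
    simp [gen, Ideal.Quotient.eq_zero_iff_mem.2 hmem]
  · simp [gen, h, swapContraction, contraction_X]

lemma mk_swapContraction_Dmat {m : ℕ} (xs ys : Fin m → ↥P) :
    Ideal.Quotient.mk (isotropicIdeal ↥P K n) (swapContraction K P n (Dmat K P m xs ys)) =
      Ideal.Quotient.mk _ (contraction ↥P ↥P K n (genericMinor K xs ys)) := by
  rw [Dmat, genericMinor, AlgHom.map_det, AlgHom.map_det, RingHom.map_det, RingHom.map_det]
  congr 1
  ext1 k l
  simpa [contraction_X] using mk_swapContraction_gen (xs k) (ys l)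

lemma mk_swapContraction_Dmat_eq_mul (xs ys : Fin n → ↥P) :
    Ideal.Quotient.mk (isotropicIdeal ↥P K n) (swapContraction K P n (Dmat K P n xs ys)) =
      Ideal.Quotient.mk _ (coordMatrix K n (Sum.inl ∘ xs)).det *
        Ideal.Quotient.mk _ (coordMatrix K n (Sum.inr ∘ ys)).det := by
  rw [mk_swapContraction_Dmat, contraction_genericMinor_eq_mul, map_mul]

lemma Rideal_le_comap_isotropicIdeal :
    Rideal K P n ≤ (isotropicIdeal ↥P K n).comap (swapContraction K P n) := by
  refine Ideal.span_le.2 ?_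
  rintro _ ⟨xs, ys, rfl⟩
  have hminor : contraction ↥P ↥P K n (genericMinor K xs ys) = 0 :=
    determinantalIdeal_le_ker_contraction K (Ideal.subset_span ⟨(xs, ys), rfl⟩)
  rw [SetLike.mem_coe, Ideal.mem_comap, ← Ideal.Quotient.eq_zero_iff_mem, mk_swapContraction_Dmat,
    hminor, map_zero]

theorem Rideal_eq_comap_isotropicIdeal [CharZero K] :
    Rideal K P n = (isotropicIdeal ↥P K n).comap (swapContraction K P n) := by
  refine le_antisymm Rideal_le_comap_isotropicIdeal fun F hF => ?_
  obtain ⟨G, hG, D, hD, hGD⟩ :=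
    Submodule.mem_sup.1 (mem_sup_span_of_contraction_mem_span (id : ↥P → ↥P) id hF)
  rw [ker_contraction] at hG
  replace hGD : G + D = rename Subtype.val F := hGD
  rw [← matrixToSwapRing_rename F, ← hGD, map_add, matrixToSwapRing_eq_zero_of_mem_span_diagonal hD,
    add_zero]
  exact matrixToSwapRing_mem_Rideal_of_mem_determinantalIdeal hG

theorem isPrime_Rideal [CharZero K] (hn : 2 ≤ n) : (Rideal K P n).IsPrime := by
  have := isPrime_isotropicIdeal (ι := ↥P) (R := K) hn
  rw [Rideal_eq_comap_isotropicIdeal]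
  exact Ideal.comap_isPrime _ _

lemma mem_Rideal_iff [CharZero K] {F : SwapRing K P} :
    F ∈ Rideal K P n ↔ Ideal.Quotient.mk (isotropicIdeal ↥P K n) (swapContraction K P n F) = 0 := by
  rw [Rideal_eq_comap_isotropicIdeal, Ideal.mem_comap, Ideal.Quotient.eq_zero_iff_mem]

theorem toZn_Dmat_mem_nonZeroDivisors [CharZero K] (hn : 2 ≤ n) {xs ys : Fin n → ↥P}
    (hxs : Function.Injective xs) (hys : Function.Injective ys) :
    toZn K P n (Dmat K P n xs ys) ∈ nonZeroDivisors (ZnRing K P n) := by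
  have := isPrime_isotropicIdeal (ι := ↥P) (R := K) hn
  have := isPrime_Rideal (K := K) (P := P) hn
  refine mem_nonZeroDivisors_of_ne_zero ?_
  rw [toZn, ne_eq, Ideal.Quotient.eq_zero_iff_mem, mem_Rideal_iff, mk_swapContraction_Dmat_eq_mul,
    mul_eq_zero, Ideal.Quotient.eq_zero_iff_mem, Ideal.Quotient.eq_zero_iff_mem, not_or]
  exact ⟨det_coordMatrix_notMem_isotropicIdeal (Sum.inl_injective.comp hxs),
    det_coordMatrix_notMem_isotropicIdeal (Sum.inr_injective.comp hys)⟩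

theorem toZn_Dmat_mul_toZn_Dmat_comm [CharZero K] (xs xs' ys ys' : Fin n → ↥P) :
    toZn K P n (Dmat K P n xs ys) * toZn K P n (Dmat K P n xs' ys') =
      toZn K P n (Dmat K P n xs ys') * toZn K P n (Dmat K P n xs' ys) := by
  rw [← map_mul, ← map_mul, toZn, Ideal.Quotient.mk_eq_mk_iff_sub_mem, mem_Rideal_iff]
  simp only [map_sub, map_mul, mk_swapContraction_Dmat_eq_mul]
  ring

end SwappingRing

section Columns

variable {α : Type*} {n : ℕ} {v : ℕ → α} {u : α}

lemma injective_of_injective_snoc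
    (h : Function.Injective fun i : Fin (n + 1) => if (i : ℕ) < n then v i else u) :
    Function.Injective fun i : Fin n => v i := fun i j hij =>
  Fin.castSucc_injective n (h (by simpa using hij))

lemma injective_update_zero_of_injective_snoc
    (h : Function.Injective fun i : Fin (n + 1) => if (i : ℕ) < n then v i else u) :
    Function.Injective fun i : Fin n => if (i : ℕ) = 0 then u else v i := by
  have hne (i : Fin n) : v i ≠ u := fun hi =>
    (Fin.castSucc_lt_last i).ne (h (by simpa using hi))
  intro i j hij
  have hv := @injective_of_injective_snoc _ _ _ _ h i j
  have := hne i
  have := hne j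
  grind

end Columns

/-- Let `x_1, …, x_{n-1}, t, y, v_1, …, v_n, u_1 ∈ P` with
`x_1, …, x_{n-1}, y` pairwise distinct and `v_1, …, v_n, u_1` pairwise distinct.  Then in
the total fraction ring `Q_n(P)` of the rank `n` swapping ring,
`Δ((x,t),(v_1,v_2,…,v_n)) / Δ((x,y),(v_1,v_2,…,v_n))
  = Δ((x,t),(u_1,v_2,…,v_n)) / Δ((x,y),(u_1,v_2,…,v_n))`
(the denominators are nonzero divisors, and the two fractions agree).
Families are indexed from `0`: `x i` denotes `x_{i+1}`, `v i` denotes `v_{i+1}`. -/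
theorem determinant_quotient_first_column (K : Type) [Field K] [CharZero K]
    (P : Set Circle1) (n : ℕ) (hn : 2 ≤ n)
    (x : ℕ → ↥P) (t y : ↥P) (v : ℕ → ↥P) (u1 : ↥P)
    (hxy : Function.Injective (snocTup (n := n) x y))
    (hvu : Function.Injective (fun i : Fin (n+1) => if (i : ℕ) < n then v (i : ℕ) else u1)) :
    toZn K P n (Dmat K P n (snocTup x y) (fun i : Fin n => v (i : ℕ)))
        ∈ nonZeroDivisors (ZnRing K P n) ∧
    toZn K P n (Dmat K P n (snocTup x y) (fun i : Fin n => if (i : ℕ) = 0 then u1 else v (i : ℕ)))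
        ∈ nonZeroDivisors (ZnRing K P n) ∧
    ∀ (h1 : toZn K P n (Dmat K P n (snocTup x y) (fun i : Fin n => v (i : ℕ)))
            ∈ nonZeroDivisors (ZnRing K P n))
      (h2 : toZn K P n (Dmat K P n (snocTup x y)
              (fun i : Fin n => if (i : ℕ) = 0 then u1 else v (i : ℕ)))
            ∈ nonZeroDivisors (ZnRing K P n)),
      EQuot K P n (snocTup x t) (snocTup x y) (fun i : Fin n => v (i : ℕ)) h1
        = EQuot K P n (snocTup x t) (snocTup x y)
            (fun i : Fin n => if (i : ℕ) = 0 then u1 else v (i : ℕ)) h2 := by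
  refine ⟨toZn_Dmat_mem_nonZeroDivisors hn hxy (injective_of_injective_snoc hvu),
    toZn_Dmat_mem_nonZeroDivisors hn hxy (injective_update_zero_of_injective_snoc hvu),
    fun h1 h2 => ?_⟩
  rw [EQuot, EQuot, Localization.mk_eq_mk_iff, Localization.r_iff_exists]
  refine ⟨1, congrArg _ ?_⟩
  rw [mul_comm, toZn_Dmat_mul_toZn_Dmat_comm, mul_comm]

end
end

section
/- Let n ≥ 2 and let a, b, x_1,…,x_{n−1}, t, y ∈ P with x_1,…,x_{n−1}, y pairwise distinct. Then the value of the swapping bracket {ab, E(x_1,…,x_{n−1}|t,y)} in Q_n(P) does not depend on the choice of the pairwise distinct right-side n-tuple (v_1,…,v_n) of points of P used to represent the determinant quotient E(x_1,…,x_{n−1}|t,y). -/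
noncomputable section

open scoped Classical
open MvPolynomial

set_option maxHeartbeats 1000000
set_option synthInstance.maxHeartbeats 400000

/-!
Two right-side tuples represent the same element of `Q_n(P)`, so its bracket with anything cannot
see the choice. Indeed, the matrix `G` of all generators `xy` has vanishing minors of size `n + 1`
over `Z_n(P)`. If `M = G(B, v)` is an `n × n` block with regular determinant, this forces
`det M • G(A, v') = G(A, v) * adj M * G(B, v')`; taking determinants and cancelling a power of
`det M` gives `Δ(A, v') * Δ(B, v) = Δ(A, v) * Δ(B, v')`.
-/

section VanishingMinors

variable {R α β ι κ : Type*} [CommRing R] [Fintype ι] [DecidableEq ι]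

-- The Schur complement formula with denominators cleared, so that `M` need not be invertible.
theorem det_fromBlocks_mul_det_adjugate_mul_pow [Fintype κ] [DecidableEq κ]
    (M : Matrix ι ι R) (B : Matrix ι κ R) (C : Matrix κ ι R) (D : Matrix κ κ R) :
    (Matrix.fromBlocks M B C D).det * (M.adjugate.det * M.det ^ Fintype.card κ) =
      M.det ^ Fintype.card ι * (M.det • D - C * M.adjugate * B).det := by
  have block_elimination :
      Matrix.fromBlocks M B C D * Matrix.fromBlocks M.adjugate (-(M.adjugate * B)) 0 (M.det • 1) =
        Matrix.fromBlocks (M.det • 1) 0 (C * M.adjugate) (M.det • D - C * M.adjugate * B) := by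
    rw [Matrix.fromBlocks_multiply]
    congr 1
    · simp [Matrix.mul_adjugate]
    · simp [← Matrix.mul_assoc, Matrix.mul_adjugate]
    · simp
    · simp [← Matrix.mul_assoc, sub_eq_neg_add]
  simpa [Matrix.det_fromBlocks_zero₁₂, Matrix.det_fromBlocks_zero₂₁]
    using congrArg Matrix.det block_elimination

theorem det_smul_sub_mul_adjugate_mul_eq_zero [Fintype κ] [DecidableEq κ]
    {M : Matrix ι ι R} {B : Matrix ι κ R} {C : Matrix κ ι R} {D : Matrix κ κ R}
    (hM : M.det ∈ nonZeroDivisors R) (hdet : (Matrix.fromBlocks M B C D).det = 0) :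
    (M.det • D - C * M.adjugate * B).det = 0 := by
  have schur := det_fromBlocks_mul_det_adjugate_mul_pow M B C D
  rw [hdet, zero_mul] at schur
  exact (mul_left_mem_nonZeroDivisors_eq_zero_iff (pow_mem hM _)).mp schur.symm

variable {G : Matrix α β R} {B : ι → α} {v : ι → β}

theorem det_smul_submatrix_eq_mul_adjugate_mul {μ : Type*}
    (hG : ∀ (r : ι ⊕ Unit → α) (c : ι ⊕ Unit → β), (G.submatrix r c).det = 0)
    (hBv : (G.submatrix B v).det ∈ nonZeroDivisors R) (A : κ → α) (w : μ → β) :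
    (G.submatrix B v).det • G.submatrix A w =
      G.submatrix A v * (G.submatrix B v).adjugate * G.submatrix B w := by
  ext i j
  let row : Unit → α := fun _ => A i
  let col : Unit → β := fun _ => w j
  have bordered_minor : (Matrix.fromBlocks (G.submatrix B v) (G.submatrix B col)
      (G.submatrix row v) (G.submatrix row col)).det = 0 := by
    rw [← hG (Sum.elim B row) (Sum.elim v col)]
    congr 1
    ext (_ | _) (_ | _) <;> rfl
  have entry := det_smul_sub_mul_adjugate_mul_eq_zero hBv bordered_minor
  rw [Matrix.det_unique, Matrix.sub_apply, sub_eq_zero] at entry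
  simpa [Matrix.mul_apply, row, col] using entry

theorem det_submatrix_mul_det_submatrix_comm
    (hG : ∀ (r : ι ⊕ Unit → α) (c : ι ⊕ Unit → β), (G.submatrix r c).det = 0)
    (hBv : (G.submatrix B v).det ∈ nonZeroDivisors R) (A : ι → α) (w : ι → β) :
    (G.submatrix A w).det * (G.submatrix B v).det =
      (G.submatrix A v).det * (G.submatrix B w).det := by
  have det_factorization :=
    congrArg Matrix.det (det_smul_submatrix_eq_mul_adjugate_mul hG hBv A w)
  have det_adjugate_mul :
      (G.submatrix B v).adjugate.det * (G.submatrix B v).det =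
        (G.submatrix B v).det ^ Fintype.card ι := by
    rw [← Matrix.det_mul, Matrix.adjugate_mul, Matrix.det_smul, Matrix.det_one, mul_one]
  rw [Matrix.det_smul, Matrix.det_mul, Matrix.det_mul] at det_factorization
  refine (mul_cancel_left_mem_nonZeroDivisors (pow_mem hBv (Fintype.card ι))).mp ?_
  linear_combination (G.submatrix B v).det * det_factorization +
    (G.submatrix A v).det * (G.submatrix B w).det * det_adjugate_mul

end VanishingMinors

section DeterminantQuotient

variable (K : Type) [Field K] (P : Set Circle1) (n : ℕ)

/-- The matrix over `Z_n(P)` whose `(x, y)` entry is the class of the generator `xy`. The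
determinants `Δ` are its minors. -/
def genMatrix : Matrix P P (ZnRing K P n) :=
  Matrix.of fun x y => toZn K P n (gen K P x y)

theorem toZn_Dmat {m : ℕ} (r c : Fin m → P) :
    toZn K P n (Dmat K P m r c) = ((genMatrix K P n).submatrix r c).det :=
  RingHom.map_det (toZn K P n) _

theorem det_genMatrix_submatrix_eq_zero (r c : Fin n ⊕ Unit → P) :
    ((genMatrix K P n).submatrix r c).det = 0 := by
  let e : Fin (n + 1) ≃ Fin n ⊕ Unit := finSuccEquivLast.trans (Equiv.optionEquivSumPUnit _)
  rw [← Matrix.det_submatrix_equiv_self e, Matrix.submatrix_submatrix, ← toZn_Dmat]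
  exact Ideal.Quotient.eq_zero_iff_mem.mpr (Ideal.subset_span ⟨_, _, rfl⟩)

variable {K P n}

theorem EQuot_right_tuple_independent (numR denR v v' : Fin n → P)
    (h : toZn K P n (Dmat K P n denR v) ∈ nonZeroDivisors (ZnRing K P n))
    (h' : toZn K P n (Dmat K P n denR v') ∈ nonZeroDivisors (ZnRing K P n)) :
    EQuot K P n numR denR v h = EQuot K P n numR denR v' h' := by
  have cross_multiplied :
      toZn K P n (Dmat K P n numR v') * toZn K P n (Dmat K P n denR v) =
        toZn K P n (Dmat K P n numR v) * toZn K P n (Dmat K P n denR v') := by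
    rw [toZn_Dmat] at h
    simp only [toZn_Dmat]
    exact det_submatrix_mul_det_submatrix_comm (det_genMatrix_submatrix_eq_zero K P n) h numR v'
  refine Localization.mk_eq_mk_iff.mpr (Localization.r_of_eq ?_)
  linear_combination -cross_multiplied

end DeterminantQuotient

theorem bracket_with_determinant_quotient_independent_general (K : Type) [Field K]
    (P : Set Circle1) (n : ℕ) (c₁ c₂ : K) (Bq : QnRing K P n → QnRing K P n → QnRing K P n)
    (_hBq : IsQnBracket K P n c₁ c₂ Bq) (q : QnRing K P n) (numR denR v v' : Fin n → P)
    (h : toZn K P n (Dmat K P n denR v) ∈ nonZeroDivisors (ZnRing K P n))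
    (h' : toZn K P n (Dmat K P n denR v') ∈ nonZeroDivisors (ZnRing K P n)) :
    Bq q (EQuot K P n numR denR v h) = Bq q (EQuot K P n numR denR v' h') :=
  congrArg (Bq q) (EQuot_right_tuple_independent numR denR v v' h h')

/-- For `a, b, x_1, …, x_{n-1}, t, y ∈ P` with `x_1, …, x_{n-1}, y`
pairwise distinct, the value of the swapping bracket `{ab, E(x_1,…,x_{n-1} | t, y)}` in
`Q_n(P)` (for any extension `Bq` of the swapping bracket to the total fraction ring) does
not depend on the pairwise distinct right-side `n`-tuple of points of `P` used to
represent the determinant quotient `E(x_1,…,x_{n-1} | t, y)`. -/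
theorem bracket_with_determinant_quotient_independent (K : Type) [Field K] [CharZero K]
    (P : Set Circle1) (n : ℕ) (hn : 2 ≤ n)
    (a b : ↥P) (x : ℕ → ↥P) (t y : ↥P)
    (hxy : Function.Injective (snocTup (n := n) x y)) :
    ∀ Bq : QnRing K P n → QnRing K P n → QnRing K P n, IsQnBracket K P n 1 0 Bq →
    ∀ v v' : Fin n → ↥P, Function.Injective v → Function.Injective v' →
    ∀ (h1 : toZn K P n (Dmat K P n (snocTup x y) v) ∈ nonZeroDivisors (ZnRing K P n))
      (h2 : toZn K P n (Dmat K P n (snocTup x y) v') ∈ nonZeroDivisors (ZnRing K P n)),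
      Bq (toQn K P n (gen K P a b)) (EQuot K P n (snocTup x t) (snocTup x y) v h1)
        = Bq (toQn K P n (gen K P a b)) (EQuot K P n (snocTup x t) (snocTup x y) v' h2) := by
  intro Bq hBq v v' _ _ h1 h2
  exact bracket_with_determinant_quotient_independent_general K P n 1 0 Bq hBq _ _ _ v v' h1 h2

end
end
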